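/- arXiv:1911.06170 — 2 statements merged into one kernel-verified Lean document; each statement's English description precedes it below -/
import Mathlib

section
/- Let ν be a Christoffel word with |ν| ≥ 2 and let x = ν^ℤ be the bi-infinite periodic word obtained by concatenating ν over ℤ. Then ι(x) = |ν| − 2. -/
/-- `u` occurs as a block of consecutive letters of the bi-infinite word `x : ℤ → Bool`. -/
def IsFactorZ (u : List Bool) (x : ℤ → Bool) : Prop :=
  ∃ i : ℤ, ∀ k : ℕ, k < u.length → x (i + k) = u.getD k false

/-- `u` occurs as a block of consecutive letters of the right-infinite word `y : ℕ → Bool`. -/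
def IsFactorN (u : List Bool) (y : ℕ → Bool) : Prop :=
  ∃ i : ℕ, ∀ k : ℕ, k < u.length → y (i + k) = u.getD k false

/-- The forbidden word `0v01ṽ1` (with `0 = false`, `1 = true`). -/
def forbidden1 (v : List Bool) : List Bool :=
  [false] ++ v ++ [false, true] ++ v.reverse ++ [true]

/-- The forbidden word `1v10ṽ0` (with `0 = false`, `1 = true`). -/
def forbidden2 (v : List Bool) : List Bool :=
  [true] ++ v ++ [true, false] ++ v.reverse ++ [false]

/-- Membership in the subshift `X_F`: no factor of `x` lies in `F`. -/
def memXF (x : ℤ → Bool) : Prop :=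
  ∀ v : List Bool, ¬ IsFactorZ (forbidden1 v) x ∧ ¬ IsFactorZ (forbidden2 v) x

/-- Membership in the one-sided subshift `Y_F`: no factor of `y` lies in `F`. -/
def memYF (y : ℕ → Bool) : Prop :=
  ∀ v : List Bool, ¬ IsFactorN (forbidden1 v) y ∧ ¬ IsFactorN (forbidden2 v) y

/-- A finite word is balanced if any two factors of equal length have numbers of
occurrences of `1` differing by at most one. -/
def BalancedL (w : List Bool) : Prop :=
  ∀ u v : List Bool, u <:+: w → v <:+: w → u.length = v.length →
    |(u.count true : ℤ) - (v.count true : ℤ)| ≤ 1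

/-- A right-infinite word is balanced if any two factors of equal length have numbers of
occurrences of `1` differing by at most one. -/
def BalancedN (y : ℕ → Bool) : Prop :=
  ∀ u v : List Bool, IsFactorN u y → IsFactorN v y → u.length = v.length →
    |(u.count true : ℤ) - (v.count true : ℤ)| ≤ 1

/-- A bi-infinite word is balanced if any two factors of equal length have numbers of
occurrences of `1` differing by at most one. -/
def BalancedZ (x : ℤ → Bool) : Prop :=
  ∀ u v : List Bool, IsFactorZ u x → IsFactorZ v x → u.length = v.length →
    |(u.count true : ℤ) - (v.count true : ℤ)| ≤ 1

/-- The lower Christoffel word of slope `p/q`: the word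
`(⌊p(i+1)/q⌋ − ⌊p·i/q⌋)_{i=0,…,q−1}` (with `0 = false`, `1 = true`). -/
def lowerChristoffel (p q : ℕ) : List Bool :=
  List.ofFn (fun i : Fin q => decide (p * ((i : ℕ) + 1) / q - p * (i : ℕ) / q = 1))

/-- The upper Christoffel word of slope `p/q`: the word
`(⌈p(i+1)/q⌉ − ⌈p·i/q⌉)_{i=0,…,q−1}` (with `0 = false`, `1 = true`). -/
def upperChristoffel (p q : ℕ) : List Bool :=
  List.ofFn (fun i : Fin q =>
    decide ((p * ((i : ℕ) + 1) + q - 1) / q - (p * (i : ℕ) + q - 1) / q = 1))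

/-- A Christoffel word is a lower or upper Christoffel word of some rational slope. -/
def IsChristoffel (w : List Bool) : Prop :=
  ∃ p q : ℕ, Nat.Coprime p q ∧ p ≤ q ∧
    (w = lowerChristoffel p q ∨ w = upperChristoffel p q)

/-- The bi-infinite periodic word `ν^ℤ`. -/
def periodize (ν : List Bool) : ℤ → Bool :=
  fun n => ν.getD ((n % (ν.length : ℤ)).toNat) false

/-!
A Christoffel word of length `q ≥ 2` is `0c1` or `1c0` for one palindrome `c`: away from multiples
of `q`, the floor and the ceiling of `p i / q` differ by exactly one, so the lower and the upper
word share their interior, and `⌊p (q - i) / q⌋ + ⌈p i / q⌉ = p` makes them mirror images.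

For `ν = a w b` with `w` a palindrome, `νν` contains `w b a w = w b a w̃`. Conversely, in a factor
`v a b ṽ` of a word of period `n`, the letter `n` places before `b` is `b` and the letter `n` places
after `a` is `a`; these two places mirror each other, so they cannot both lie in the factor.
-/

theorem div_add_ceilDiv_of_add_eq_mul {m n p q : ℕ} (hq : 0 < q) (h : m + n = p * q) :
    m / q + n ⌈/⌉ q = p := by
  have hmod : m % q < q := Nat.mod_lt m hq
  have hm : q * (m / q) + m % q = m := Nat.div_add_mod m q
  obtain ⟨d, hd⟩ : ∃ d, p = m / q + d :=
    Nat.exists_eq_add_of_le ((Nat.div_le_iff_le_mul hq).2 (by omega))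
  have hn : n + q - 1 = q - 1 - m % q + q * d := by
    have hp : p * q = q * (m / q) + q * d := by rw [← mul_add, ← hd, mul_comm]
    omega
  rw [Nat.ceilDiv_eq_add_pred_div, hn, Nat.add_mul_div_left _ _ hq,
    Nat.div_eq_of_lt (show q - 1 - m % q < q by omega), zero_add, ← hd]

theorem ceilDiv_eq_div_add_one_of_not_dvd {n q : ℕ} (hq : 0 < q) (h : ¬ q ∣ n) :
    n ⌈/⌉ q = n / q + 1 := by
  have hsucc : n + q - 1 + 1 = n + q := by omega
  have hdvd : ¬ q ∣ n + q - 1 + 1 := by rwa [hsucc, Nat.dvd_add_self_right]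
  rw [Nat.ceilDiv_eq_add_pred_div, ← Nat.succ_div_of_not_dvd hdvd, hsucc,
    Nat.add_div_right n hq]

theorem ceilDiv_eq_one_of_pos_of_le {n q : ℕ} (hn : 0 < n) (hnq : n ≤ q) : n ⌈/⌉ q = 1 := by
  rw [Nat.ceilDiv_eq_add_pred_div]
  exact Nat.div_eq_of_lt_le (by omega) (by omega)

theorem upperChristoffel_eq_ofFn_ceilDiv (p q : ℕ) :
    upperChristoffel p q =
      List.ofFn fun i : Fin q => decide (p * (i + 1) ⌈/⌉ q - p * i ⌈/⌉ q = 1) := by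
  simp only [upperChristoffel, Nat.ceilDiv_eq_add_pred_div]

theorem reverse_lowerChristoffel (p q : ℕ) :
    (lowerChristoffel p q).reverse = upperChristoffel p q := by
  rw [upperChristoffel_eq_ofFn_ceilDiv]
  refine List.ext_getElem (by simp [lowerChristoffel]) fun i _ hi => ?_
  rw [List.length_ofFn] at hi
  have floor_add_ceil (m n : ℕ) (h : m + n = q) : p * m / q + p * n ⌈/⌉ q = p :=
    div_add_ceilDiv_of_add_eq_mul (by omega) (by rw [← mul_add, h])
  have hleft := floor_add_ceil (q - 1 - i + 1) i (by omega)
  have hright := floor_add_ceil (q - 1 - i) (i + 1) (by omega)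
  simp only [lowerChristoffel, List.getElem_reverse, List.getElem_ofFn, List.length_ofFn,
    decide_eq_decide]
  omega

/-- The central word of slope `p/q`: the lower Christoffel word of slope `p/q` without its first
and last letters. -/
def centralWord (p q : ℕ) : List Bool :=
  List.ofFn fun i : Fin (q - 2) => decide (p * (i + 2) / q - p * (i + 1) / q = 1)

theorem lowerChristoffel_eq_cons_centralWord_append {p q : ℕ} (hp : 0 < p) (hpq : p < q) :
    lowerChristoffel p q = false :: (centralWord p q ++ [true]) := by
  obtain ⟨n, rfl⟩ : ∃ n, q = n + 2 := Nat.exists_eq_add_of_le' (by omega)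
  have hfirst : p / (n + 2) = 0 := Nat.div_eq_of_lt hpq
  have hlast : p * (n + 1) / (n + 2) + p ⌈/⌉ (n + 2) = p :=
    div_add_ceilDiv_of_add_eq_mul (by omega) (by ring)
  rw [ceilDiv_eq_one_of_pos_of_le hp hpq.le] at hlast
  have hend : p - p * (n + 1) / (n + 2) = 1 := by omega
  rw [lowerChristoffel, List.ofFn_succ, List.ofFn_succ_last]
  simp [centralWord, add_assoc, hfirst, hend]

theorem upperChristoffel_eq_cons_centralWord_append {p q : ℕ} (hcop : p.Coprime q) (hp : 0 < p)
    (hpq : p < q) : upperChristoffel p q = true :: (centralWord p q ++ [false]) := by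
  obtain ⟨n, rfl⟩ : ∃ n, q = n + 2 := Nat.exists_eq_add_of_le' (by omega)
  have hceil (i : ℕ) (h0 : 0 < i) (hi : i < n + 2) :
      p * i ⌈/⌉ (n + 2) = p * i / (n + 2) + 1 :=
    ceilDiv_eq_div_add_one_of_not_dvd (by omega) fun hdvd =>
      Nat.not_dvd_of_pos_of_lt h0 hi (hcop.symm.dvd_of_dvd_mul_left hdvd)
  have hinterior (i : Fin n) :
      p * (i + 2) ⌈/⌉ (n + 2) - p * (i + 1) ⌈/⌉ (n + 2) =
        p * (i + 2) / (n + 2) - p * (i + 1) / (n + 2) := by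
    rw [hceil (i + 2) (by omega) (by omega), hceil (i + 1) (by omega) (by omega),
      Nat.add_sub_add_right]
  have hfirst : p ⌈/⌉ (n + 2) = 1 := ceilDiv_eq_one_of_pos_of_le hp hpq.le
  have hlast : p / (n + 2) + p * (n + 1) ⌈/⌉ (n + 2) = p :=
    div_add_ceilDiv_of_add_eq_mul (by omega) (by ring)
  have hwhole : p * (n + 2) ⌈/⌉ (n + 2) = p := by
    simpa using div_add_ceilDiv_of_add_eq_mul (by omega) (zero_add (p * (n + 2)))
  rw [Nat.div_eq_of_lt hpq, zero_add] at hlast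
  rw [upperChristoffel_eq_ofFn_ceilDiv, List.ofFn_succ, List.ofFn_succ_last]
  simp [centralWord, add_assoc, hfirst, hlast, hwhole, hinterior]

theorem centralWord_palindrome {p q : ℕ} (hcop : p.Coprime q) (hp : 0 < p) (hpq : p < q) :
    (centralWord p q).Palindrome := by
  have hmirror := reverse_lowerChristoffel p q
  rw [lowerChristoffel_eq_cons_centralWord_append hp hpq,
    upperChristoffel_eq_cons_centralWord_append hcop hp hpq] at hmirror
  exact .of_reverse_eq (by simpa using hmirror)

theorem IsChristoffel.exists_eq_cons_palindrome_append {ν : List Bool} (hν : IsChristoffel ν)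
    (hlen : 2 ≤ ν.length) :
    ∃ (a b : Bool) (w : List Bool), a ≠ b ∧ w.Palindrome ∧ ν = a :: (w ++ [b]) := by
  obtain ⟨p, q, hcop, hle, hν⟩ := hν
  have hq : 2 ≤ q := by
    rcases hν with rfl | rfl <;> simpa [lowerChristoffel, upperChristoffel] using hlen
  have hp : 0 < p := Nat.pos_of_ne_zero <| by
    rintro rfl
    rw [Nat.coprime_zero_left] at hcop
    omega
  have hpq : p < q := hle.lt_of_ne <| by
    rintro rfl
    rw [Nat.coprime_self] at hcop
    omega
  have hpal := centralWord_palindrome hcop hp hpq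
  rcases hν with rfl | rfl
  · exact ⟨_, _, _, Bool.false_ne_true, hpal,
      lowerChristoffel_eq_cons_centralWord_append hp hpq⟩
  · exact ⟨_, _, _, Bool.false_ne_true.symm, hpal,
      upperChristoffel_eq_cons_centralWord_append hcop hp hpq⟩

theorem isFactorZ_iff_getElem {u : List Bool} {x : ℤ → Bool} :
    IsFactorZ u x ↔ ∃ i : ℤ, ∀ (k : ℕ) (hk : k < u.length), x (i + k) = u[k] := by
  refine exists_congr fun i => forall₂_congr fun k hk => ?_
  rw [List.getD_eq_getElem _ _ hk]

theorem IsFactorZ.of_isInfix {u w : List Bool} {x : ℤ → Bool} (hw : IsFactorZ w x)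
    (huw : u <:+: w) : IsFactorZ u x := by
  rw [isFactorZ_iff_getElem] at hw ⊢
  obtain ⟨s, t, rfl⟩ := huw
  obtain ⟨i, hi⟩ := hw
  refine ⟨i + s.length, fun k hk => ?_⟩
  simpa [add_assoc, List.getElem_append, hk] using hi (s.length + k) (by grind)

theorem periodic_periodize (ν : List Bool) :
    Function.Periodic (periodize ν) (ν.length : ℤ) := fun n => by
  simp [periodize]

theorem isFactorZ_append_self_periodize (ν : List Bool) : IsFactorZ (ν ++ ν) (periodize ν) := by
  have hfirst (k : ℕ) (hk : k < ν.length) : periodize ν k = ν[k] := by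
    rw [periodize, ← Int.natCast_mod, Int.toNat_natCast, Nat.mod_eq_of_lt hk,
      List.getD_eq_getElem _ _ hk]
  refine isFactorZ_iff_getElem.2 ⟨0, fun k hk => ?_⟩
  rw [zero_add, List.getElem_append]
  split_ifs with h
  · exact hfirst k h
  · rw [List.length_append] at hk
    rw [← hfirst (k - ν.length) (by omega), Nat.cast_sub (by omega), (periodic_periodize ν).sub_eq]

theorem isFactorZ_periodize_of_palindrome (a b : Bool) {w : List Bool} (hw : w.Palindrome) :
    IsFactorZ (w ++ [b, a] ++ w.reverse) (periodize (a :: (w ++ [b]))) :=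
  (isFactorZ_append_self_periodize _).of_isInfix ⟨[a], [b], by simp [hw.reverse_eq]⟩

theorem IsFactorZ.exists_center {v : List Bool} {a b : Bool} {x : ℤ → Bool}
    (h : IsFactorZ (v ++ [a, b] ++ v.reverse) x) :
    ∃ c : ℤ, x c = a ∧ x (c + 1) = b ∧
      ∀ j : ℕ, 0 < j → j ≤ v.length → x (c - j) = x (c + 1 + j) := by
  obtain ⟨i, hi⟩ := isFactorZ_iff_getElem.1 h
  refine ⟨i + v.length, ?_, ?_, fun j hj hjv => ?_⟩
  · simpa using hi v.length (by simp)
  · simpa [add_assoc] using hi (v.length + 1) (by simp)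
  · have hleft : x (i + v.length - j) = v[v.length - j] := by
      simpa [add_sub_assoc, Nat.cast_sub hjv, List.getElem_append, hj, hj.trans_le hjv]
        using hi (v.length - j) (by grind)
    have hright : x (i + v.length + 1 + j) = v[v.length - j] := by
      obtain ⟨k, rfl⟩ := Nat.exists_eq_add_one.2 hj
      have hindex : i + v.length + 1 + (k + 1 : ℕ) = i + (v.length + (k + 2) : ℕ) := by omega
      rw [hindex, hi _ (by grind)]
      simp [Nat.sub_sub, add_comm 1 k]
    rw [hleft, hright]

theorem IsFactorZ.length_add_two_le_of_periodic {v : List Bool} {a b : Bool} {x : ℤ → Bool}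
    {n : ℕ} (h : IsFactorZ (v ++ [a, b] ++ v.reverse) x) (hab : a ≠ b)
    (hx : Function.Periodic x (n : ℤ)) (hn : 0 < n) : v.length + 2 ≤ n := by
  obtain ⟨c, rfl, rfl, hmirror⟩ := h.exists_center
  obtain ⟨m, rfl⟩ := Nat.exists_eq_add_of_lt hn
  by_contra! hlt
  have hm : x (c - m) = x (c + 1 + m) := by
    rcases m.eq_zero_or_pos with rfl | hpos
    · simpa using (hx c).symm
    · exact hmirror m hpos (by omega)
  refine hab ?_
  calc
    x c = x (c + 1 + m) := by rw [← hx c]; congr 1; push_cast; ring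
    _ = x (c - m) := hm.symm
    _ = x (c + 1) := by rw [← hx (c - m)]; congr 1; push_cast; ring

theorem stmt18_general {a b : Bool} {w : List Bool} (hab : a ≠ b) (hw : w.Palindrome) :
    (∃ v : List Bool, v.length = w.length ∧
      (IsFactorZ (v ++ [false, true] ++ v.reverse) (periodize (a :: (w ++ [b]))) ∨
        IsFactorZ (v ++ [true, false] ++ v.reverse) (periodize (a :: (w ++ [b]))))) ∧
    (∀ v : List Bool,
      (IsFactorZ (v ++ [false, true] ++ v.reverse) (periodize (a :: (w ++ [b]))) ∨
        IsFactorZ (v ++ [true, false] ++ v.reverse) (periodize (a :: (w ++ [b])))) →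
      v.length ≤ w.length) := by
  have hbound {v : List Bool} {s t : Bool} (hst : s ≠ t)
      (h : IsFactorZ (v ++ [s, t] ++ v.reverse) (periodize (a :: (w ++ [b])))) :
      v.length ≤ w.length := by
    simpa using h.length_add_two_le_of_periodic hst (periodic_periodize _) (by simp)
  refine ⟨⟨w, rfl, ?_⟩, fun v hv => hv.elim (hbound (by decide)) (hbound (by decide))⟩
  have hfactor := isFactorZ_periodize_of_palindrome a b hw
  rcases Bool.eq_false_or_eq_true a with rfl | rfl
  · obtain rfl : b = false := Bool.eq_false_of_not_eq_true hab.symm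
    exact .inl hfactor
  · obtain rfl : b = true := Bool.eq_true_of_not_eq_false hab.symm
    exact .inr hfactor

theorem stmt18 (ν : List Bool) (hν : IsChristoffel ν) (h2 : 2 ≤ ν.length) :
    (∃ v : List Bool, v.length = ν.length - 2 ∧
      (IsFactorZ (v ++ [false, true] ++ v.reverse) (periodize ν) ∨
        IsFactorZ (v ++ [true, false] ++ v.reverse) (periodize ν))) ∧
    (∀ v : List Bool,
      (IsFactorZ (v ++ [false, true] ++ v.reverse) (periodize ν) ∨
        IsFactorZ (v ++ [true, false] ++ v.reverse) (periodize ν)) →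
      v.length ≤ ν.length - 2) := by
  obtain ⟨a, b, w, hab, hw, rfl⟩ := hν.exists_eq_cons_palindrome_append h2
  simpa using stmt18_general hab hw
end

section
/- Let α be a quadratic Pisot unit with α ≥ 3, i.e. α = (b+√(b²−4))/2 with an integer b ≥ 4 or α = (b+√(b²+4))/2 with an integer b ≥ 3. Then there exists a real number κ < 1/2 such that the whole interval [κ, 1/2] is contained in 𝓛(α). In particular, 𝓛(α) has positive Lebesgue measure. -/
/-- Distance from `x` to the nearest integer. -/
noncomputable def distNearestInt (x : ℝ) : ℝ := |x - round x|

/-- `limsup_{n→∞} ‖ξ·α^n‖`. -/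
noncomputable def limsupDist (α ξ : ℝ) : ℝ :=
  Filter.limsup (fun n : ℕ => distNearestInt (ξ * α ^ n)) Filter.atTop

/-- The multiplicative Markoff–Lagrange spectrum `𝓛(α)`. -/
noncomputable def specL (α : ℝ) : Set ℝ := {l : ℝ | ∃ ξ : ℝ, limsupDist α ξ = l}

/-!
For a bounded sequence of integers `x`, vanishing at negative positions, there is a `ξ` such that
`ξ αⁿ` equals, modulo `1`, the sum of all `x (n + i) α⁻ⁱ` with `i ≥ 0` and all `x (n - i) α'ⁱ` with
`i > 0`, divided by `α - α'`.
Hence `t ≤ 1 / 2` lies in the spectrum as soon as there are finite patterns whose two-sided sum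
tends to `(α - α') t` at the centre and is at most `(α - α') t` elsewhere: concatenate longer and
longer ones.

To find such a pattern, expand `(α - α') t` in base `α` with nearest-integer digits, and split each
digit into two halves placed symmetrically about the centre. Both halves have the same weight
because `|α'| = α⁻¹`, and halving makes the entries off the centre so small that their two-sided
sums stay below a constant `B < (α - α') / 2`. For the two smallest values of `α` the leading digits
are chosen by hand, and the bound on the other ones uses that in base less than `4` a digit `2` is
never followed by a positive digit.
-/

open Filter Topology

/-! ### Digit sums -/

/-- The value `∑ yᵢ qⁱ` of a sequence of integer digits in base `q⁻¹`. -/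
noncomputable def digitSum (q : ℝ) (y : ℕ → ℤ) : ℝ := ∑' i, (y i : ℝ) * q ^ i

section DigitSum

variable {q C : ℝ} {y z : ℕ → ℤ}

lemma hasSum_digit_bound (hq : |q| < 1) : HasSum (fun i : ℕ => C * |q| ^ i) (C / (1 - |q|)) := by
  simpa only [div_eq_mul_inv] using
    (hasSum_geometric_of_lt_one (abs_nonneg q) hq).mul_left C

lemma norm_digit_mul_pow_le (hy : ∀ i, |(y i : ℝ)| ≤ C) (i : ℕ) :
    ‖(y i : ℝ) * q ^ i‖ ≤ C * |q| ^ i := by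
  rw [norm_mul, norm_pow, Real.norm_eq_abs, Real.norm_eq_abs]
  exact mul_le_mul_of_nonneg_right (hy i) (by positivity)

lemma summable_digit_mul_pow (hq : |q| < 1) (hy : ∀ i, |(y i : ℝ)| ≤ C) :
    Summable fun i => (y i : ℝ) * q ^ i :=
  (hasSum_digit_bound hq).summable.of_norm_bounded (norm_digit_mul_pow_le hy)

lemma abs_digitSum_le (hq : |q| < 1) (hy : ∀ i, |(y i : ℝ)| ≤ C) :
    |digitSum q y| ≤ C / (1 - |q|) :=
  tsum_of_norm_bounded (hasSum_digit_bound hq) (norm_digit_mul_pow_le hy)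

lemma digitSum_eq_add_mul (hq : |q| < 1) (hy : ∀ i, |(y i : ℝ)| ≤ C) :
    digitSum q y = y 0 + q * digitSum q (fun i => y (i + 1)) := by
  unfold digitSum
  rw [(summable_digit_mul_pow hq hy).tsum_eq_zero_add, ← tsum_mul_left, pow_zero, mul_one]
  congr 2 with i
  ring

lemma digitSum_zero : digitSum q (fun _ => 0) = 0 := by simp [digitSum]

lemma digitSum_add {C' : ℝ} (hq : |q| < 1) (hy : ∀ i, |(y i : ℝ)| ≤ C)
    (hz : ∀ i, |(z i : ℝ)| ≤ C') :
    digitSum q (fun i => y i + z i) = digitSum q y + digitSum q z := by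
  unfold digitSum
  rw [← (summable_digit_mul_pow hq hy).tsum_add (summable_digit_mul_pow hq hz)]
  congr 1 with i
  push_cast
  ring

lemma abs_digitSum_sub_le (hq : |q| < 1) (R : ℕ) (hy : ∀ i, |(y i : ℝ)| ≤ C)
    (hz : ∀ i, |(z i : ℝ)| ≤ C) (hyz : ∀ i < R, y i = z i) :
    |digitSum q y - digitSum q z| ≤ |q| ^ R * (2 * C / (1 - |q|)) := by
  induction R generalizing y z with
  | zero =>
    calc |digitSum q y - digitSum q z|
      _ ≤ |digitSum q y| + |digitSum q z| := abs_sub _ _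
      _ ≤ C / (1 - |q|) + C / (1 - |q|) :=
        add_le_add (abs_digitSum_le hq hy) (abs_digitSum_le hq hz)
      _ = |q| ^ 0 * (2 * C / (1 - |q|)) := by ring
  | succ R ih =>
    have htail := ih (fun i => hy (i + 1)) (fun i => hz (i + 1))
      fun i hi => hyz (i + 1) (Nat.succ_lt_succ hi)
    rw [digitSum_eq_add_mul hq hy, digitSum_eq_add_mul hq hz, hyz 0 R.succ_pos,
      add_sub_add_left_eq_sub, ← mul_sub, abs_mul, pow_succ', mul_assoc]
    exact mul_le_mul_of_nonneg_left htail (abs_nonneg q)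

end DigitSum

/-- The digit sequence `y` truncated to its first `J` terms. -/
def truncate (J : ℕ) (y : ℕ → ℤ) (k : ℕ) : ℤ := if k < J then y k else 0

lemma abs_truncate_le {C : ℝ} {y : ℕ → ℤ} (hy : ∀ k, |(y k : ℝ)| ≤ C) (J k : ℕ) :
    |(truncate J y k : ℝ)| ≤ C := by
  unfold truncate
  split_ifs
  · exact hy k
  · simpa using (abs_nonneg _).trans (hy 0)

lemma tendsto_digitSum_truncate {q C : ℝ} {y : ℕ → ℤ} (hq : |q| < 1)
    (hy : ∀ k, |(y k : ℝ)| ≤ C) :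
    Tendsto (fun J => digitSum q (truncate J y)) atTop (𝓝 (digitSum q y)) := by
  rw [tendsto_iff_norm_sub_tendsto_zero]
  refine squeeze_zero (fun _ => norm_nonneg _)
    (fun J => abs_digitSum_sub_le hq J (abs_truncate_le hy J) hy fun i hi => if_pos hi) ?_
  simpa using (tendsto_pow_atTop_nhds_zero_of_lt_one (abs_nonneg q) hq).mul_const _

/-! ### Two-sided sums -/

/-- `α` is a quadratic Pisot number with conjugate `α'`, the roots of `X² - b X + c`;
integers `α` are included, with `α' = 0`. -/
structure IsQuadraticPisot (α α' : ℝ) (b c : ℤ) : Prop where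
  one_lt : 1 < α
  abs_conj_lt_one : |α'| < 1
  add_conj : α + α' = b
  mul_conj : α * α' = c

/-- `∑ x (n + i) α⁻ⁱ` over `i ≥ 0`. -/
noncomputable def rightSum (α : ℝ) (x : ℤ → ℤ) (n : ℤ) : ℝ := digitSum α⁻¹ fun i => x (n + i)

/-- `∑ x (n - i) α'ⁱ` over `i ≥ 0`. -/
noncomputable def leftSum (α' : ℝ) (x : ℤ → ℤ) (n : ℤ) : ℝ := digitSum α' fun i => x (n - i)

/-- The weighted sum of a bi-infinite integer sequence around the position `n`, with weights
`α⁻ⁱ` to the right and `α'ⁱ` to the left; divided by `α - α'` it represents `ξ αⁿ` modulo `1`.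
The term `x n` occurs in both one-sided sums. -/
noncomputable def twoSidedSum (α α' : ℝ) (x : ℤ → ℤ) (n : ℤ) : ℝ :=
  rightSum α x n + leftSum α' x n - x n

lemma exists_int_eq_of_recurrence {N : ℕ → ℝ} {b c : ℤ} {x : ℕ → ℤ} (h₀ : ∃ m : ℤ, N 0 = m)
    (h₁ : ∃ m : ℤ, N 1 = m) (hrec : ∀ n, N (n + 2) = b * N (n + 1) - c * N n + x n) (n : ℕ) :
    ∃ m : ℤ, N n = m := by
  induction n using Nat.twoStepInduction with
  | zero => exact h₀
  | one => exact h₁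
  | more n ih₀ ih₁ =>
    obtain ⟨m₀, hm₀⟩ := ih₀
    obtain ⟨m₁, hm₁⟩ := ih₁
    exact ⟨b * m₁ - c * m₀ + x n, by rw [hrec, hm₀, hm₁]; push_cast; rfl⟩

section TwoSidedSum

variable {α α' C : ℝ} {b c : ℤ} {x y : ℤ → ℤ}

lemma abs_inv_lt_one (hα : 1 < α) : |α⁻¹| < 1 := by
  rw [abs_of_pos (by positivity)]
  exact inv_lt_one_of_one_lt₀ hα

lemma rightSum_eq (hα : 1 < α) (hx : ∀ n, |(x n : ℝ)| ≤ C) (n : ℤ) :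
    rightSum α x n = x n + α⁻¹ * rightSum α x (n + 1) := by
  unfold rightSum
  rw [digitSum_eq_add_mul (abs_inv_lt_one hα) fun i => hx (n + i)]
  simp only [Nat.cast_zero, add_zero, Nat.cast_add, Nat.cast_one, add_assoc, add_comm (1 : ℤ)]

lemma leftSum_eq (hα' : |α'| < 1) (hx : ∀ n, |(x n : ℝ)| ≤ C) (n : ℤ) :
    leftSum α' x n = x n + α' * leftSum α' x (n - 1) := by
  unfold leftSum
  rw [digitSum_eq_add_mul hα' fun i => hx (n - i)]
  simp only [Nat.cast_zero, sub_zero, Nat.cast_add, Nat.cast_one, sub_sub, add_comm (1 : ℤ)]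

lemma leftSum_of_eq_zero (hneg : ∀ n < 0, x n = 0) : leftSum α' x 0 = x 0 := by
  unfold leftSum digitSum
  rw [tsum_eq_single 0 fun i hi => by simp only [hneg (0 - i) (by omega), Int.cast_zero, zero_mul]]
  simp

lemma mul_twoSidedSum_sub (hα : 1 < α) (hα' : |α'| < 1) (hx : ∀ n, |(x n : ℝ)| ≤ C) (n : ℤ) :
    α * twoSidedSum α α' x n - twoSidedSum α α' x (n + 1) = (α - α') * leftSum α' x n := by
  have hright := rightSum_eq hα hx n
  have hleft := leftSum_eq hα' hx (n + 1)
  rw [add_sub_cancel_right] at hleft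
  have hinv : α * α⁻¹ = 1 := mul_inv_cancel₀ (by positivity)
  unfold twoSidedSum
  linear_combination α * hright - hleft + rightSum α x (n + 1) * hinv

lemma abs_twoSidedSum_sub_le (hα : 1 < α) (hα' : |α'| < 1) (hx : ∀ n, |(x n : ℝ)| ≤ C)
    (hy : ∀ n, |(y n : ℝ)| ≤ C) {n m : ℤ} {R : ℕ}
    (hxy : ∀ i : ℤ, |i| ≤ R → x (n + i) = y (m + i)) :
    |twoSidedSum α α' x n - twoSidedSum α α' y m| ≤
      |α⁻¹| ^ R * (2 * C / (1 - |α⁻¹|)) + |α'| ^ R * (2 * C / (1 - |α'|)) := by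
  have hright : |rightSum α x n - rightSum α y m| ≤ |α⁻¹| ^ R * (2 * C / (1 - |α⁻¹|)) :=
    abs_digitSum_sub_le (abs_inv_lt_one hα) R (fun i => hx _) (fun i => hy _)
      fun i hi => hxy i (by rw [Nat.abs_cast]; omega)
  have hleft : |leftSum α' x n - leftSum α' y m| ≤ |α'| ^ R * (2 * C / (1 - |α'|)) :=
    abs_digitSum_sub_le hα' R (fun i => hx _) (fun i => hy _)
      fun i hi => hxy (-i) (by rw [abs_neg, Nat.abs_cast]; omega)
  have hcentre : x n = y m := by simpa using hxy 0 (by simp)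
  calc |twoSidedSum α α' x n - twoSidedSum α α' y m|
      = |(rightSum α x n - rightSum α y m) + (leftSum α' x n - leftSum α' y m)| := by
        rw [twoSidedSum, twoSidedSum, hcentre]
        ring_nf
    _ ≤ _ := (abs_add_le _ _).trans (add_le_add hright hleft)

namespace IsQuadraticPisot

lemma conj_lt (h : IsQuadraticPisot α α' b c) : α' < α :=
  ((le_abs_self _).trans_lt h.abs_conj_lt_one).trans h.one_lt

lemma exists_mul_pow_eq_int_add (h : IsQuadraticPisot α α' b c) (hx : ∀ n, |(x n : ℝ)| ≤ C)
    (hneg : ∀ n < 0, x n = 0) :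
    ∃ ξ : ℝ, ∀ n : ℕ, ∃ N : ℤ, ξ * α ^ n = N + twoSidedSum α α' x n / (α - α') := by
  have hD : α - α' ≠ 0 := (sub_pos.2 h.conj_lt).ne'
  let ξ := twoSidedSum α α' x 0 / (α - α')
  let N : ℕ → ℝ := fun n => ξ * α ^ n - twoSidedSum α α' x n / (α - α')
  have hN_zero : N 0 = 0 := by simp [N, ξ]
  have hN_succ (n : ℕ) : N (n + 1) = α * N n + leftSum α' x n := by
    have hstep := mul_twoSidedSum_sub h.one_lt h.abs_conj_lt_one hx n
    simp only [N, Nat.cast_add, Nat.cast_one]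
    field_simp
    linear_combination hstep
  have hN_one : N 1 = x 0 := by
    rw [hN_succ 0, hN_zero, Nat.cast_zero, leftSum_of_eq_zero hneg, mul_zero, zero_add]
  have hN_add_two (n : ℕ) : N (n + 2) = b * N (n + 1) - c * N n + x (n + 1) := by
    have hleft := leftSum_eq h.abs_conj_lt_one hx (n + 1)
    rw [add_sub_cancel_right] at hleft
    have hsucc := hN_succ (n + 1)
    push_cast at hsucc
    rw [hsucc, ← h.add_conj, ← h.mul_conj]
    linear_combination hleft - α' * hN_succ n
  refine ⟨ξ, fun n => ?_⟩
  obtain ⟨m, hm⟩ := exists_int_eq_of_recurrence (x := fun n : ℕ => x (n + 1))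
    ⟨0, by simpa using hN_zero⟩ ⟨x 0, hN_one⟩ hN_add_two n
  exact ⟨m, by rw [← hm]; simp [N]⟩

end IsQuadraticPisot

end TwoSidedSum

/-! ### Concatenation of finite patterns -/

lemma distNearestInt_int_add_le (N : ℤ) (y : ℝ) : distNearestInt (N + y) ≤ |y| := by
  simpa [distNearestInt] using round_le ((N : ℝ) + y) N

lemma sub_le_distNearestInt_int_add {y t : ℝ} (ht : t ≤ 1 / 2) (N : ℤ) :
    t - |y - t| ≤ distNearestInt (N + y) := by
  set z := round ((N : ℝ) + y) with hz
  have hdist : t ≤ |t - (z - N : ℤ)| := by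
    rcases le_or_gt (z - N) 0 with hle | hpos
    · have : ((z - N : ℤ) : ℝ) ≤ 0 := by exact_mod_cast hle
      exact le_abs.2 (.inl (by linarith))
    · have : (1 : ℝ) ≤ (z - N : ℤ) := by exact_mod_cast hpos
      exact le_abs.2 (.inr (by linarith))
  calc t - |y - t| ≤ |t - (z - N : ℤ)| - |t - y| := by rw [abs_sub_comm y t]; linarith
    _ ≤ |t - (z - N : ℤ) - (t - y)| := abs_sub_abs_le_abs_sub _ _
    _ = distNearestInt (N + y) := by rw [distNearestInt, ← hz]; push_cast; ring_nf

lemma limsup_eq_of_eventually_le_of_frequently_ge {u e : ℕ → ℝ} {t : ℝ} (hu : ∀ n, 0 ≤ u n)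
    (hle : ∀ᶠ n in atTop, u n ≤ t + e n) (hge : ∃ᶠ n in atTop, t - e n ≤ u n)
    (he : Tendsto e atTop (𝓝 0)) : limsup u atTop = t := by
  have hupper : Tendsto (fun n => t + e n) atTop (𝓝 t) := by simpa using he.const_add t
  have hlower : Tendsto (fun n => t - e n) atTop (𝓝 t) := by simpa using he.const_sub t
  have hbdd := hupper.isBoundedUnder_le
  apply le_antisymm
  · rw [← hupper.limsup_eq]
    exact limsup_le_limsup hle (isCoboundedUnder_le_of_le (x := 0) _ hu) hbdd
  · refine le_of_forall_lt fun a ha => ?_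
    obtain ⟨a', haa', ha't⟩ := exists_between ha
    refine haa'.trans_le (le_limsup_of_frequently_le ?_ (hbdd.mono_le hle))
    exact (hge.and_eventually (hlower.eventually_const_lt ha't)).mono
      fun n hn => hn.2.le.trans hn.1

/-- The signed distance from `n` to the centre `s² + s` of the block `[s², s² + 2 s]` of natural
numbers with integer square root `s`. -/
def blockOffset (n : ℕ) : ℤ := n - (n.sqrt * n.sqrt + n.sqrt)

/-- The sequence which vanishes at negative positions and carries, for each `s`, the pattern
`z (s / 2)` centred at `s² + s`. -/
def concatPatterns (z : ℕ → ℤ → ℤ) : ℤ → ℤ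
  | .ofNat n => z (n.sqrt / 2) (blockOffset n)
  | .negSucc _ => 0

section ConcatPatterns

variable {z : ℕ → ℤ → ℤ}

lemma concatPatterns_of_neg {n : ℤ} (hn : n < 0) : concatPatterns z n = 0 := by
  obtain ⟨k, rfl⟩ := Int.eq_negSucc_of_lt_zero hn
  rfl

lemma abs_concatPatterns_le {C : ℝ} (hz : ∀ J n, |(z J n : ℝ)| ≤ C) (n : ℤ) :
    |(concatPatterns z n : ℝ)| ≤ C := by
  cases n with
  | ofNat n => exact hz _ _
  | negSucc n => simpa [concatPatterns] using (abs_nonneg _).trans (hz 0 0)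

lemma abs_blockOffset_le (n : ℕ) : |blockOffset n| ≤ n.sqrt := by
  have hle : ((n.sqrt * n.sqrt : ℕ) : ℤ) ≤ n := by exact_mod_cast n.sqrt_le
  have hge : (n : ℤ) ≤ (n.sqrt * n.sqrt + n.sqrt + n.sqrt : ℕ) := by exact_mod_cast n.sqrt_le_add
  push_cast at hle hge
  rw [blockOffset, abs_le]
  constructor <;> linarith

lemma blockOffset_centre (s : ℕ) : blockOffset (s * s + s) = 0 := by
  rw [blockOffset, Nat.sqrt_add_eq _ (by omega)]
  push_cast
  ring

lemma concatPatterns_block {s : ℕ} {d : ℤ} (hd : |d| ≤ s) :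
    concatPatterns z (s * s + s + d) = z (s / 2) d := by
  obtain ⟨hd₁, hd₂⟩ := abs_le.1 hd
  obtain ⟨i, hi⟩ := Int.eq_ofNat_of_zero_le (show 0 ≤ s + d by linarith)
  have hpos : (s * s + s + d : ℤ) = (s * s + i : ℕ) := by push_cast; linarith
  have hsqrt : (s * s + i).sqrt = s := Nat.sqrt_add_eq s (by omega)
  rw [hpos, ← Int.ofNat_eq_natCast, concatPatterns, blockOffset, hsqrt]
  congr 1
  linarith

lemma concatPatterns_extended_block (hz : ∀ (J : ℕ) (n : ℤ), J < |n| → z J n = 0) {s : ℕ} {d : ℤ}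
    (hd : |d| ≤ s + s / 2) : concatPatterns z (s * s + s + d) = z (s / 2) d := by
  obtain ⟨hd₁, hd₂⟩ := abs_le.1 hd
  rcases lt_trichotomy |d| s with hlt | heq | hgt
  · exact concatPatterns_block hlt.le
  · exact concatPatterns_block heq.le
  rw [hz _ d (by push_cast; omega)]
  rcases lt_abs.1 hgt with hright | hleft
  · have hshift : (s * s + s + d : ℤ) =
        (s + 1 : ℕ) * (s + 1 : ℕ) + (s + 1 : ℕ) + (d - 2 * s - 2) := by push_cast; ring
    rw [hshift, concatPatterns_block (abs_le.2 (by omega))]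
    exact hz _ _ (lt_abs.2 (by omega))
  · obtain _ | s := s
    · omega
    have hshift : ((s + 1 : ℕ) * (s + 1 : ℕ) + (s + 1 : ℕ) + d : ℤ) =
        s * s + s + (d + 2 * s + 2) := by push_cast; ring
    rw [hshift, concatPatterns_block (abs_le.2 (by omega))]
    exact hz _ _ (lt_abs.2 (by omega))

lemma concatPatterns_near (hz : ∀ (J : ℕ) (n : ℤ), J < |n| → z J n = 0) (n : ℕ) {i : ℤ}
    (hi : |i| ≤ (n.sqrt / 2 : ℕ)) :
    concatPatterns z (n + i) = z (n.sqrt / 2) (blockOffset n + i) := by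
  have hoffset := abs_blockOffset_le n
  have hn : (n + i : ℤ) = n.sqrt * n.sqrt + n.sqrt + (blockOffset n + i) := by
    rw [blockOffset]
    ring
  rw [hn, concatPatterns_extended_block hz]
  exact (abs_add_le _ _).trans (by push_cast at hi; linarith)

end ConcatPatterns

lemma tendsto_sqrt_div_two : Tendsto (fun n : ℕ => n.sqrt / 2) atTop atTop := by
  refine tendsto_atTop_atTop.2 fun m => ⟨(2 * m) * (2 * m), fun n hn => ?_⟩
  have := Nat.le_sqrt.2 hn
  omega

lemma tendsto_pow_mul_add_pow_mul {p r : ℝ} (hp : |p| < 1) (hr : |r| < 1) (K L : ℝ) :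
    Tendsto (fun R : ℕ => |p| ^ R * K + |r| ^ R * L) atTop (𝓝 0) := by
  simpa using ((tendsto_pow_atTop_nhds_zero_of_lt_one (abs_nonneg p) hp).mul_const K).add
    ((tendsto_pow_atTop_nhds_zero_of_lt_one (abs_nonneg r) hr).mul_const L)

lemma frequently_blockOffset_eq_zero : ∃ᶠ n in atTop, blockOffset n = 0 :=
  frequently_atTop.2 fun s => ⟨s * s + s, Nat.le_add_left _ _, blockOffset_centre s⟩

section Spectrum

variable {α α' C t : ℝ} {b c : ℤ}

lemma IsQuadraticPisot.mem_specL_of_twoSidedSum (h : IsQuadraticPisot α α' b c) {x : ℤ → ℤ}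
    {e : ℕ → ℝ} (hx : ∀ n, |(x n : ℝ)| ≤ C) (hneg : ∀ n < 0, x n = 0) (ht : t ≤ 1 / 2)
    (hle : ∀ᶠ n : ℕ in atTop, |twoSidedSum α α' x n| ≤ (α - α') * t + e n)
    (hnear : ∃ᶠ n : ℕ in atTop, |twoSidedSum α α' x n - (α - α') * t| ≤ e n)
    (he : Tendsto e atTop (𝓝 0)) : t ∈ specL α := by
  have hD : 0 < α - α' := sub_pos.2 h.conj_lt
  obtain ⟨ξ, hξ⟩ := h.exists_mul_pow_eq_int_add hx hneg
  refine ⟨ξ, limsup_eq_of_eventually_le_of_frequently_ge (e := fun n => e n / (α - α'))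
    (fun n => abs_nonneg _) ?_ ?_ (by simpa using he.div_const (α - α'))⟩
  · filter_upwards [hle] with n hn
    obtain ⟨N, hN⟩ := hξ n
    rw [hN]
    refine (distNearestInt_int_add_le N _).trans ?_
    rwa [abs_div, abs_of_pos hD, div_le_iff₀ hD, add_mul, div_mul_cancel₀ _ hD.ne', mul_comm t]
  · refine hnear.mono fun n hn => ?_
    obtain ⟨N, hN⟩ := hξ n
    have hdist : |twoSidedSum α α' x n / (α - α') - t| ≤ e n / (α - α') := by
      rw [div_sub' hD.ne', abs_div, abs_of_pos hD]
      exact div_le_div_of_nonneg_right hn hD.le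
    rw [hN]
    exact (sub_le_sub_left hdist t).trans (sub_le_distNearestInt_int_add ht N)

lemma IsQuadraticPisot.mem_specL_of_patterns (h : IsQuadraticPisot α α' b c) {z : ℕ → ℤ → ℤ}
    (hbound : ∀ J n, |(z J n : ℝ)| ≤ C) (hsupport : ∀ (J : ℕ) (n : ℤ), J < |n| → z J n = 0)
    (ht₀ : 0 ≤ t) (ht : t ≤ 1 / 2)
    (hcentre : Tendsto (fun J => twoSidedSum α α' (z J) 0) atTop (𝓝 ((α - α') * t)))
    (hoff : ∀ᶠ J in atTop, ∀ n ≠ 0, |twoSidedSum α α' (z J) n| ≤ (α - α') * t) :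
    t ∈ specL α := by
  let E : ℕ → ℝ := fun n => twoSidedSum α α' (concatPatterns z) n
  let gap : ℕ → ℝ := fun R =>
    |α⁻¹| ^ R * (2 * C / (1 - |α⁻¹|)) + |α'| ^ R * (2 * C / (1 - |α'|))
  let e : ℕ → ℝ := fun J => gap J + |twoSidedSum α α' (z J) 0 - (α - α') * t|
  have he : Tendsto e atTop (𝓝 0) := by
    have hgap : Tendsto gap atTop (𝓝 0) :=
      tendsto_pow_mul_add_pow_mul (abs_inv_lt_one h.one_lt) h.abs_conj_lt_one _ _
    simpa only [add_zero, sub_self, abs_zero] using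
      hgap.add (hcentre.sub_const ((α - α') * t)).abs
  have hclose (n : ℕ) :
      |E n - twoSidedSum α α' (z (n.sqrt / 2)) (blockOffset n)| ≤ gap (n.sqrt / 2) :=
    abs_twoSidedSum_sub_le h.one_lt h.abs_conj_lt_one (abs_concatPatterns_le hbound)
      (hbound _) fun i hi => concatPatterns_near hsupport n hi
  have hE_centre (n : ℕ) (hn : blockOffset n = 0) :
      |E n - (α - α') * t| ≤ e (n.sqrt / 2) := by
    have hn_close := hclose n
    rw [hn] at hn_close
    exact (abs_sub_le _ _ _).trans (add_le_add_left hn_close _)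
  have hE_le : ∀ᶠ n in atTop, |E n| ≤ (α - α') * t + e (n.sqrt / 2) := by
    filter_upwards [tendsto_sqrt_div_two.eventually hoff] with n hn
    by_cases hzero : blockOffset n = 0
    · have := abs_sub_abs_le_abs_sub (E n) ((α - α') * t)
      rw [abs_of_nonneg (mul_nonneg (sub_nonneg.2 h.conj_lt.le) ht₀)] at this
      linarith [hE_centre n hzero]
    · have := abs_sub_abs_le_abs_sub (E n) (twoSidedSum α α' (z (n.sqrt / 2)) (blockOffset n))
      have := hn _ hzero
      linarith [hclose n, abs_nonneg (twoSidedSum α α' (z (n.sqrt / 2)) 0 - (α - α') * t)]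
  exact h.mem_specL_of_twoSidedSum (abs_concatPatterns_le hbound)
    (fun n hn => concatPatterns_of_neg hn) ht hE_le
    (frequently_blockOffset_eq_zero.mono hE_centre) (he.comp tendsto_sqrt_div_two)

end Spectrum

/-! ### Patterns with a peak at the centre -/

/-- The bi-infinite sequence with entry `a` at `0`, entries `f` to the right of `0` and, read
outwards, entries `g` to the left of `0`. The signs `cᵏ` on the left make both sides enter the
two-sided sum at `0` with the weights `α⁻ᵏ` when `α` is a unit of norm `c`. -/
def pattern (c a : ℤ) (f g : ℕ → ℤ) : ℤ → ℤ
  | .ofNat 0 => a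
  | .ofNat (k + 1) => f k
  | .negSucc k => c ^ (k + 1) * g k

/-- The contribution of the entries before position `k` to the sum at the `k`-th entry of `f`, when
each step away is weighted by `r` and the entries before `f 0` contribute `s` in total. -/
def carry (r s : ℝ) (f : ℕ → ℤ) : ℕ → ℝ
  | 0 => r * s
  | k + 1 => r * (f k + carry r s f k)

/-- The two-sided sum at the `k`-th entry of a sequence `f` preceded by entries of total
contribution `s`, with weights `qⁱ` outwards and `rⁱ` inwards. -/
noncomputable def sideSum (q r s : ℝ) (f : ℕ → ℤ) (k : ℕ) : ℝ :=
  digitSum q (fun i => f (k + i)) + carry r s f k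

lemma abs_carry_le {r s m V : ℝ} {f : ℕ → ℤ} (hf : ∀ k, |(f k : ℝ)| ≤ m) (hs : |r * s| ≤ V)
    (hV : |r| * (m + V) ≤ V) (k : ℕ) : |carry r s f k| ≤ V := by
  induction k with
  | zero => exact hs
  | succ k ih =>
    rw [carry, abs_mul]
    exact (mul_le_mul_of_nonneg_left ((abs_add_le _ _).trans (add_le_add (hf k) ih))
      (abs_nonneg r)).trans hV

lemma abs_sideSum_le {q r s m V O : ℝ} {f : ℕ → ℤ} (hf : ∀ k, |(f k : ℝ)| ≤ m)
    (hO : ∀ k, |digitSum q (fun i => f (k + i))| ≤ O) (hs : |r * s| ≤ V)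
    (hV : |r| * (m + V) ≤ V) (k : ℕ) : |sideSum q r s f k| ≤ O + V :=
  (abs_add_le _ _).trans (add_le_add (hO k) (abs_carry_le hf hs hV k))

lemma eq_zero_or_exists_eq_succ_or_exists_eq_neg_succ (n : ℤ) :
    n = 0 ∨ (∃ k : ℕ, n = k + 1) ∨ ∃ k : ℕ, n = -(k + 1) :=
  match n with
  | .ofNat 0 => .inl rfl
  | .ofNat (k + 1) => .inr (.inl ⟨k, rfl⟩)
  | .negSucc k => .inr (.inr ⟨k, Int.negSucc_eq k⟩)

section Pattern

variable {α α' C : ℝ} {b c a : ℤ} {f g : ℕ → ℤ}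

lemma pattern_zero : pattern c a f g 0 = a := rfl

lemma pattern_succ (k : ℕ) : pattern c a f g (k + 1) = f k := rfl

lemma pattern_neg_succ (k : ℕ) : pattern c a f g (-(k + 1)) = c ^ (k + 1) * g k := by
  rw [← Int.negSucc_eq]
  rfl

lemma pattern_truncate_eq_zero {J : ℕ} {n : ℤ} (hn : J < |n|) :
    pattern c a (truncate J f) (truncate J g) n = 0 := by
  rw [lt_abs] at hn
  rcases eq_zero_or_exists_eq_succ_or_exists_eq_neg_succ n with rfl | ⟨k, rfl⟩ | ⟨k, rfl⟩
  · omega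
  · rw [pattern_succ, truncate, if_neg (by omega)]
  · rw [pattern_neg_succ, truncate, if_neg (by omega), mul_zero]

lemma abs_intCast_eq_one (hc : c * c = 1) : |(c : ℝ)| = 1 := by
  rcases mul_self_eq_one_iff.1 hc with rfl | rfl <;> simp

lemma abs_pattern_le (hc : c * c = 1) (hf : ∀ k, |(f k : ℝ)| ≤ C) (hg : ∀ k, |(g k : ℝ)| ≤ C)
    (n : ℤ) : |(pattern c a f g n : ℝ)| ≤ max |(a : ℝ)| C := by
  rcases eq_zero_or_exists_eq_succ_or_exists_eq_neg_succ n with rfl | ⟨k, rfl⟩ | ⟨k, rfl⟩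
  · exact le_max_left _ _
  · exact (hf k).trans (le_max_right _ _)
  · rw [pattern_neg_succ, Int.cast_mul, Int.cast_pow, abs_mul, abs_pow, abs_intCast_eq_one hc,
      one_pow, one_mul]
    exact (hg k).trans (le_max_right _ _)

lemma rightSum_pattern_succ (k : ℕ) :
    rightSum α (pattern c a f g) (k + 1) = digitSum α⁻¹ fun i => f (k + i) := by
  unfold rightSum
  congr 1 with i
  rw [show (k + 1 + i : ℤ) = (k + i : ℕ) + 1 by push_cast; ring, pattern_succ]

lemma leftSum_pattern_neg_succ (hconj : c * α' = α⁻¹) (k : ℕ) :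
    leftSum α' (pattern c a f g) (-(k + 1)) =
      c ^ (k + 1) * digitSum α⁻¹ fun i => g (k + i) := by
  have hentry (i : ℕ) :
      pattern c a f g (-(k + 1) - i) = c ^ (k + i + 1) * g (k + i) := by
    rw [show (-(k + 1) - i : ℤ) = -((k + i : ℕ) + 1) by push_cast; ring, pattern_neg_succ]
  simp only [leftSum, digitSum, ← tsum_mul_left, hentry, ← hconj]
  congr 1 with i
  push_cast
  ring

lemma rightSum_pattern_zero (hα : 1 < α) (hx : ∀ n, |(pattern c a f g n : ℝ)| ≤ C) :
    rightSum α (pattern c a f g) 0 = a + α⁻¹ * digitSum α⁻¹ f := by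
  have hsucc := rightSum_pattern_succ (α := α) (c := c) (a := a) (f := f) (g := g) 0
  simp only [Nat.cast_zero, zero_add] at hsucc
  rw [rightSum_eq hα hx, pattern_zero, zero_add, hsucc]

lemma leftSum_pattern_zero (hconj : c * α' = α⁻¹) (hα' : |α'| < 1)
    (hx : ∀ n, |(pattern c a f g n : ℝ)| ≤ C) :
    leftSum α' (pattern c a f g) 0 = a + α⁻¹ * digitSum α⁻¹ g := by
  have hsucc := leftSum_pattern_neg_succ (a := a) (f := f) (g := g) hconj 0
  simp only [Nat.cast_zero, zero_add, pow_one] at hsucc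
  rw [leftSum_eq hα' hx, pattern_zero, zero_sub, hsucc, ← hconj]
  ring

lemma mul_leftSum_pattern (hconj : c * α' = α⁻¹) (hα' : |α'| < 1)
    (hx : ∀ n, |(pattern c a f g n : ℝ)| ≤ C) (k : ℕ) :
    α' * leftSum α' (pattern c a f g) k = carry α' (a + α⁻¹ * digitSum α⁻¹ g) f k := by
  induction k with
  | zero => rw [Nat.cast_zero, leftSum_pattern_zero hconj hα' hx, carry]
  | succ k ih =>
    rw [Nat.cast_succ, leftSum_eq hα' hx, add_sub_cancel_right, ih, pattern_succ, carry]

lemma inv_mul_rightSum_pattern (hα : 1 < α) (hconj : c * α' = α⁻¹)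
    (hx : ∀ n, |(pattern c a f g n : ℝ)| ≤ C) (k : ℕ) :
    α⁻¹ * rightSum α (pattern c a f g) (-k) =
      c ^ (k + 1) * carry α' (a + α⁻¹ * digitSum α⁻¹ f) g k := by
  induction k with
  | zero =>
    rw [Nat.cast_zero, neg_zero, rightSum_pattern_zero hα hx, carry, ← hconj]
    ring
  | succ k ih =>
    rw [Nat.cast_succ, rightSum_eq hα hx, show (-(k + 1) + 1 : ℤ) = -k by ring, ih,
      pattern_neg_succ, carry, ← hconj]
    push_cast
    ring

lemma twoSidedSum_pattern_zero (hα : 1 < α) (hconj : c * α' = α⁻¹) (hα' : |α'| < 1)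
    (hx : ∀ n, |(pattern c a f g n : ℝ)| ≤ C) :
    twoSidedSum α α' (pattern c a f g) 0 =
      a + α⁻¹ * (digitSum α⁻¹ f + digitSum α⁻¹ g) := by
  rw [twoSidedSum, rightSum_pattern_zero hα hx, leftSum_pattern_zero hconj hα' hx, pattern_zero]
  ring

lemma twoSidedSum_pattern_succ (hconj : c * α' = α⁻¹) (hα' : |α'| < 1)
    (hx : ∀ n, |(pattern c a f g n : ℝ)| ≤ C) (k : ℕ) :
    twoSidedSum α α' (pattern c a f g) (k + 1) =
      sideSum α⁻¹ α' (a + α⁻¹ * digitSum α⁻¹ g) f k := by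
  rw [twoSidedSum, rightSum_pattern_succ, leftSum_eq hα' hx, add_sub_cancel_right,
    mul_leftSum_pattern hconj hα' hx, sideSum]
  ring

lemma twoSidedSum_pattern_neg_succ (hα : 1 < α) (hconj : c * α' = α⁻¹)
    (hx : ∀ n, |(pattern c a f g n : ℝ)| ≤ C) (k : ℕ) :
    twoSidedSum α α' (pattern c a f g) (-(k + 1)) =
      c ^ (k + 1) * sideSum α⁻¹ α' (a + α⁻¹ * digitSum α⁻¹ f) g k := by
  rw [twoSidedSum, leftSum_pattern_neg_succ hconj, rightSum_eq hα hx,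
    show (-(k + 1) + 1 : ℤ) = -k by ring, inv_mul_rightSum_pattern hα hconj hx, sideSum]
  ring

end Pattern

/-- The pattern with centre `a` and sides `f`, `g` has the two-sided sum `v` at its centre, while
all its long truncations have two-sided sums of absolute value at most `B` elsewhere. -/
structure IsPeakedPattern (α α' B v : ℝ) (a : ℤ) (f g : ℕ → ℤ) : Prop where
  exists_bound : ∃ C : ℝ, ∀ k, |(f k : ℝ)| ≤ C ∧ |(g k : ℝ)| ≤ C
  centre_eq : a + α⁻¹ * (digitSum α⁻¹ f + digitSum α⁻¹ g) = v
  right_le : ∀ᶠ J in atTop, ∀ k,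
    |sideSum α⁻¹ α' (a + α⁻¹ * digitSum α⁻¹ (truncate J g)) (truncate J f) k| ≤ B
  left_le : ∀ᶠ J in atTop, ∀ k,
    |sideSum α⁻¹ α' (a + α⁻¹ * digitSum α⁻¹ (truncate J f)) (truncate J g) k| ≤ B

namespace IsQuadraticPisot

variable {α α' B : ℝ} {b c : ℤ}

lemma mul_conj_eq_inv (h : IsQuadraticPisot α α' b c) (hc : c * c = 1) : c * α' = α⁻¹ := by
  have hc' : (c : ℝ) * c = 1 := by exact_mod_cast hc
  refine eq_inv_of_mul_eq_one_left ?_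
  linear_combination c * h.mul_conj + hc'

lemma mem_specL_of_isPeakedPattern (h : IsQuadraticPisot α α' b c) (hc : c * c = 1) {t : ℝ}
    (ht₀ : 0 ≤ t) (ht : t ≤ 1 / 2) (hB : B ≤ (α - α') * t) {a : ℤ} {f g : ℕ → ℤ}
    (hpat : IsPeakedPattern α α' B ((α - α') * t) a f g) : t ∈ specL α := by
  obtain ⟨C, hC⟩ := hpat.exists_bound
  have hconj := h.mul_conj_eq_inv hc
  have hbound (J : ℕ) := abs_pattern_le (a := a) hc
    (abs_truncate_le (fun k => (hC k).1) J) (abs_truncate_le (fun k => (hC k).2) J)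
  refine h.mem_specL_of_patterns hbound (fun J n hn => pattern_truncate_eq_zero hn) ht₀ ht ?_ ?_
  · have hq := abs_inv_lt_one h.one_lt
    rw [← hpat.centre_eq]
    simp_rw [fun J => twoSidedSum_pattern_zero h.one_lt hconj h.abs_conj_lt_one (hbound J)]
    exact (((tendsto_digitSum_truncate hq fun k => (hC k).1).add
      (tendsto_digitSum_truncate hq fun k => (hC k).2)).const_mul _).const_add _
  · filter_upwards [hpat.right_le, hpat.left_le] with J hright hleft n hn
    refine le_trans ?_ hB
    rcases eq_zero_or_exists_eq_succ_or_exists_eq_neg_succ n with rfl | ⟨k, rfl⟩ | ⟨k, rfl⟩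
    · exact absurd rfl hn
    · rw [twoSidedSum_pattern_succ hconj h.abs_conj_lt_one (hbound J)]
      exact hright k
    · rw [twoSidedSum_pattern_neg_succ h.one_lt hconj (hbound J), abs_mul, abs_pow,
        abs_intCast_eq_one hc, one_pow, one_mul]
      exact hleft k

lemma exists_Icc_subset_specL (h : IsQuadraticPisot α α' b c) (hc : c * c = 1)
    (hB : 2 * B < α - α')
    (hpat : ∀ᶠ t in 𝓝[≤] (1 / 2), ∃ a f g, IsPeakedPattern α α' B ((α - α') * t) a f g) :
    ∃ κ < 1 / 2, Set.Icc κ (1 / 2) ⊆ specL α := by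
  have hB' : ∀ᶠ t in 𝓝[≤] (1 / 2 : ℝ), B < (α - α') * t :=
    (continuous_const_mul (α - α')).continuousWithinAt.eventually_const_lt (by linarith)
  have ht₀ : ∀ᶠ t in 𝓝[≤] (1 / 2 : ℝ), 0 < t :=
    continuousWithinAt_id.eventually_const_lt (by norm_num)
  refine (mem_nhdsLE_iff_exists_Icc_subset (a := (1 / 2 : ℝ))).1 ?_
  filter_upwards [hB', ht₀, hpat, self_mem_nhdsWithin] with t hBt ht₀ ⟨a, f, g, hafg⟩ ht
  exact h.mem_specL_of_isPeakedPattern hc ht₀.le ht hBt.le hafg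

end IsQuadraticPisot

/-! ### Halving the nearest-integer expansion -/

/-- The remainders of the expansion of `x` in base `α` with digits given by nearest integers. -/
noncomputable def roundRemainder (α x : ℝ) : ℕ → ℝ
  | 0 => x
  | k + 1 => α * roundRemainder α x k - round (α * roundRemainder α x k)

/-- The digits of the expansion of `x` in base `α` obtained by rounding to the nearest integer. -/
noncomputable def roundDigit (α x : ℝ) (k : ℕ) : ℤ := round (α * roundRemainder α x k)

/-- Half of the digit sequence `y`, rounded up and down alternately; the parity `σ` selects the
places where a half-integer is rounded up. -/
def halfDigit (y : ℕ → ℤ) (σ k : ℕ) : ℤ := (y k + ((k + σ) % 2 : ℕ)) / 2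

section RoundDigit

variable {α x : ℝ}

lemma roundRemainder_succ (k : ℕ) :
    roundRemainder α x (k + 1) = α * roundRemainder α x k - roundDigit α x k := rfl

lemma abs_roundRemainder_le (hx : |x| ≤ 1 / 2) (k : ℕ) : |roundRemainder α x k| ≤ 1 / 2 := by
  cases k with
  | zero => exact hx
  | succ k => exact abs_sub_round _

lemma abs_mul_roundRemainder_le (hα : 0 ≤ α) (hx : |x| ≤ 1 / 2) (k : ℕ) :
    |α * roundRemainder α x k| ≤ α / 2 := by
  rw [abs_mul, abs_of_nonneg hα]
  linarith [mul_le_mul_of_nonneg_left (abs_roundRemainder_le (α := α) hx k) hα]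

lemma abs_roundDigit_le (hα : 0 ≤ α) (hx : |x| ≤ 1 / 2) (k : ℕ) :
    |(roundDigit α x k : ℝ)| ≤ (α + 1) / 2 := by
  have hdigit : (roundDigit α x k : ℝ) =
      α * roundRemainder α x k - roundRemainder α x (k + 1) := by
    rw [roundRemainder_succ]
    ring
  rw [hdigit]
  linarith [abs_sub (α * roundRemainder α x k) (roundRemainder α x (k + 1)),
    abs_mul_roundRemainder_le hα hx k, abs_roundRemainder_le (α := α) hx (k + 1)]

lemma abs_roundDigit_le_two (hα : 0 ≤ α) (hα_lt : α < 5) (hx : |x| ≤ 1 / 2) (k : ℕ) :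
    |roundDigit α x k| ≤ 2 := by
  have hlt : |(roundDigit α x k : ℝ)| < 3 := by linarith [abs_roundDigit_le hα hx k]
  exact Int.lt_add_one_iff.1 (by exact_mod_cast hlt)

lemma sum_roundDigit (hα : α ≠ 0) (n : ℕ) :
    ∑ i ∈ Finset.range n, (roundDigit α x i : ℝ) * α⁻¹ ^ i =
      α * x - α⁻¹ ^ n * (α * roundRemainder α x n) := by
  induction n with
  | zero => simp [roundRemainder]
  | succ n ih =>
    rw [Finset.sum_range_succ, ih, roundRemainder_succ, pow_succ]
    field_simp
    ring

lemma digitSum_roundDigit (hα : 1 < α) (hx : |x| ≤ 1 / 2) :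
    digitSum α⁻¹ (roundDigit α x) = α * x := by
  have hα₀ : 0 < α := zero_lt_one.trans hα
  have hq := abs_inv_lt_one hα
  have hsum := (summable_digit_mul_pow hq (abs_roundDigit_le hα₀.le hx)).hasSum.tendsto_sum_nat
  simp_rw [sum_roundDigit hα₀.ne'] at hsum
  have herror : Tendsto (fun n => α⁻¹ ^ n * (α * roundRemainder α x n)) atTop (𝓝 0) :=
    (tendsto_pow_atTop_nhds_zero_of_abs_lt_one hq).zero_mul_isBoundedUnder_le
      (isBoundedUnder_of ⟨α / 2, abs_mul_roundRemainder_le hα₀.le hx⟩)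
  exact tendsto_nhds_unique hsum (by simpa using herror.const_sub (α * x))

end RoundDigit

section HalfDigit

variable {y : ℕ → ℤ} {σ k : ℕ}

lemma halfDigit_add_halfDigit (y : ℕ → ℤ) (k : ℕ) :
    halfDigit y 0 k + halfDigit y 1 k = y k := by
  unfold halfDigit
  omega

lemma abs_two_mul_halfDigit_sub_le : |2 * (halfDigit y σ k : ℝ) - y k| ≤ 1 := by
  have hint : |2 * halfDigit y σ k - y k| ≤ 1 := by
    unfold halfDigit
    exact abs_le.2 (by omega)
  exact_mod_cast hint

lemma abs_halfDigit_le {M : ℝ} (hy : |(y k : ℝ)| ≤ M) : |(halfDigit y σ k : ℝ)| ≤ (M + 1) / 2 := by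
  have hhalf := abs_le.1 (abs_two_mul_halfDigit_sub_le (y := y) (σ := σ) (k := k))
  have hy' := abs_le.1 hy
  exact abs_le.2 ⟨by linarith, by linarith⟩

lemma abs_halfDigit_le_one (hy : |y k| ≤ 2) : |(halfDigit y σ k : ℝ)| ≤ 1 := by
  have hint : |halfDigit y σ k| ≤ 1 := by
    rw [abs_le] at hy ⊢
    unfold halfDigit
    omega
  exact_mod_cast hint

lemma digitSum_halfDigit_add {q C : ℝ} (hq : |q| < 1) (hy : ∀ k, |(y k : ℝ)| ≤ C) :
    digitSum q (halfDigit y 0) + digitSum q (halfDigit y 1) = digitSum q y := by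
  rw [← digitSum_add hq (fun k => abs_halfDigit_le (hy k)) fun k => abs_halfDigit_le (hy k)]
  simp only [halfDigit_add_halfDigit]

end HalfDigit

section HalfRoundDigit

variable {α x : ℝ}

lemma digitSum_shift {q C : ℝ} {y : ℕ → ℤ} (hq : |q| < 1) (hy : ∀ k, |(y k : ℝ)| ≤ C) (k : ℕ) :
    digitSum q (fun i => y (k + i)) = y k + q * digitSum q fun i => y (k + 1 + i) := by
  rw [digitSum_eq_add_mul hq fun i => hy (k + i)]
  simp only [add_zero, add_assoc, add_comm 1]

lemma digitSum_truncate_shift_of_le {q : ℝ} {y : ℕ → ℤ} {J k : ℕ} (hk : J ≤ k) :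
    digitSum q (fun i => truncate J y (k + i)) = 0 := by
  rw [← digitSum_zero (q := q)]
  congr 1 with i
  exact if_neg (by omega)

lemma inv_mul_digitSum_halfDigit_add (hα : 1 < α) (hx : |x| ≤ 1 / 2) :
    α⁻¹ * (digitSum α⁻¹ (halfDigit (roundDigit α x) 0) +
      digitSum α⁻¹ (halfDigit (roundDigit α x) 1)) = x := by
  have hα₀ : 0 < α := zero_lt_one.trans hα
  rw [digitSum_halfDigit_add (abs_inv_lt_one hα) (abs_roundDigit_le hα₀.le hx),
    digitSum_roundDigit hα hx, inv_mul_cancel_left₀ hα₀.ne']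

/-- Rounding errors do not accumulate: the expansion of `x` being generated by the same
recursion, `2 α⁻¹ ∑ h (k + i) α⁻ⁱ` stays within `1 / 2` of the `k`-th remainder. -/
lemma abs_two_mul_digitSum_truncate_sub_le (hα : 3 ≤ α) (hx : |x| ≤ 1 / 2) {C : ℝ} {h : ℕ → ℤ}
    (hC : ∀ k, |(h k : ℝ)| ≤ C) (hh : ∀ k, |2 * (h k : ℝ) - roundDigit α x k| ≤ 1) (J k : ℕ) :
    |2 * (α⁻¹ * digitSum α⁻¹ fun i => truncate J h (k + i)) - roundRemainder α x k| ≤ 1 / 2 := by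
  induction hn : J - k generalizing k with
  | zero =>
    rw [digitSum_truncate_shift_of_le (by omega), mul_zero, mul_zero, zero_sub, abs_neg]
    exact abs_roundRemainder_le hx k
  | succ n ih =>
    have hα₀ : α ≠ 0 := by positivity
    have htrunc : truncate J h k = h k := if_pos (by omega)
    have hrec : 2 * (α⁻¹ * digitSum α⁻¹ fun i => truncate J h (k + i)) - roundRemainder α x k =
        α⁻¹ * ((2 * h k - roundDigit α x k) +
          (2 * (α⁻¹ * digitSum α⁻¹ fun i => truncate J h (k + 1 + i)) -
            roundRemainder α x (k + 1))) := by
      rw [digitSum_shift (abs_inv_lt_one (by linarith)) (abs_truncate_le hC J), htrunc,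
        roundRemainder_succ]
      field_simp
      ring
    rw [hrec, abs_mul, abs_inv, abs_of_pos (by positivity), inv_mul_le_iff₀ (by positivity)]
    exact ((abs_add_le _ _).trans (add_le_add (hh k) (ih (k + 1) (by omega)))).trans
      (by linarith)

lemma abs_digitSum_truncate_le (hα : 3 ≤ α) (hx : |x| ≤ 1 / 2) {C : ℝ} {h : ℕ → ℤ}
    (hC : ∀ k, |(h k : ℝ)| ≤ C) (hh : ∀ k, |2 * (h k : ℝ) - roundDigit α x k| ≤ 1) (J k : ℕ) :
    |digitSum α⁻¹ fun i => truncate J h (k + i)| ≤ (α + 3) / 4 := by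
  rcases le_or_gt J k with hk | hk
  · rw [digitSum_truncate_shift_of_le hk, abs_zero]
    linarith
  · have htail := abs_le.1 (abs_two_mul_digitSum_truncate_sub_le hα hx hC hh J (k + 1))
    have hdigit := abs_le.1 (hh k)
    have hrem := abs_le.1 (abs_mul_roundRemainder_le (show 0 ≤ α by linarith) hx k)
    rw [digitSum_shift (abs_inv_lt_one (by linarith)) (abs_truncate_le hC J),
      show truncate J h k = h k from if_pos hk]
    rw [roundRemainder_succ] at htail
    exact abs_le.2 ⟨by linarith, by linarith⟩

end HalfRoundDigit

namespace IsQuadraticPisot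

variable {α α' : ℝ} {b c : ℤ}

lemma abs_conj_eq_inv (h : IsQuadraticPisot α α' b c) (hc : c * c = 1) : |α'| = α⁻¹ := by
  rw [← abs_of_pos (inv_pos.2 (zero_lt_one.trans h.one_lt)), ← h.mul_conj_eq_inv hc, abs_mul,
    abs_intCast_eq_one hc, one_mul]

lemma eventually_abs_sideSum_truncate_le (h : IsQuadraticPisot α α' b c) (hc : c * c = 1)
    {O V v : ℝ} {a : ℤ} {f g : ℕ → ℤ} (hf : ∀ k, |(f k : ℝ)| ≤ O) (hg : ∀ k, |(g k : ℝ)| ≤ O)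
    (hO : ∀ J k, |digitSum α⁻¹ fun i => truncate J f (k + i)| ≤ O)
    (hv : a + α⁻¹ * (digitSum α⁻¹ f + digitSum α⁻¹ g) = v)
    (hV : α⁻¹ * (|v| + α⁻¹ * O) < V) (hOV : α⁻¹ * (O + V) ≤ V) :
    ∀ᶠ J in atTop, ∀ k,
      |sideSum α⁻¹ α' (a + α⁻¹ * digitSum α⁻¹ (truncate J g)) (truncate J f) k| ≤ O + V := by
  have hq := abs_inv_lt_one h.one_lt
  have hq₀ : 0 < α⁻¹ := inv_pos.2 (zero_lt_one.trans h.one_lt)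
  have hf_sum : |digitSum α⁻¹ f| ≤ O :=
    le_of_tendsto' (tendsto_digitSum_truncate hq hf).abs fun J => by simpa using hO J 0
  have hlim : |α' * (a + α⁻¹ * digitSum α⁻¹ g)| < V := by
    have hcentre : a + α⁻¹ * digitSum α⁻¹ g = v - α⁻¹ * digitSum α⁻¹ f := by
      linear_combination hv
    rw [hcentre, abs_mul, h.abs_conj_eq_inv hc]
    refine lt_of_le_of_lt (mul_le_mul_of_nonneg_left ((abs_sub _ _).trans ?_) hq₀.le) hV
    rw [abs_mul, abs_of_pos hq₀]
    gcongr
  filter_upwards [((((tendsto_digitSum_truncate hq hg).const_mul α⁻¹).const_add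
    (a : ℝ)).const_mul α').abs.eventually_lt_const hlim] with J hJ
  exact abs_sideSum_le (abs_truncate_le hf J) (hO J) hJ.le
    (by rwa [h.abs_conj_eq_inv hc])

lemma exists_Icc_subset_specL_of_halfDigit_le (h : IsQuadraticPisot α α' b c) (hc : c * c = 1)
    {O : ℝ} (hdigit : ∀ x, |x| ≤ 1 / 2 → ∀ σ k, |(halfDigit (roundDigit α x) σ k : ℝ)| ≤ O)
    (hsum : ∀ x, |x| ≤ 1 / 2 → ∀ σ J k,
      |digitSum α⁻¹ fun i => truncate J (halfDigit (roundDigit α x) σ) (k + i)| ≤ O)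
    (hO : (1 + α⁻¹ ^ 2) * O < (1 - α⁻¹) * ((α - α') / 2)) :
    ∃ κ < 1 / 2, Set.Icc κ (1 / 2) ⊆ specL α := by
  have hq₀ : 0 < α⁻¹ := inv_pos.2 (zero_lt_one.trans h.one_lt)
  have hD : 0 < α - α' := sub_pos.2 h.conj_lt
  obtain ⟨V, hV, hOV⟩ : ∃ V, α⁻¹ * ((α - α') / 2 + α⁻¹ * O) < V ∧ V < (α - α') / 2 - O :=
    exists_between (by linarith)
  refine h.exists_Icc_subset_specL hc (B := O + V) (by linarith) ?_
  filter_upwards [self_mem_nhdsWithin,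
    mem_nhdsWithin_of_mem_nhds (Ici_mem_nhds one_half_pos)] with t (ht : t ≤ 1 / 2) (ht₀ : 0 ≤ t)
  set v := (α - α') * t
  have hx : |v - round v| ≤ 1 / 2 := abs_sub_round v
  set y := roundDigit α (v - round v)
  have hcentre : round v + α⁻¹ * (digitSum α⁻¹ (halfDigit y 0) + digitSum α⁻¹ (halfDigit y 1)) =
      v := by
    rw [inv_mul_digitSum_halfDigit_add h.one_lt hx, add_sub_cancel]
  have hv_le : |v| ≤ (α - α') / 2 := by
    rw [abs_of_nonneg (by positivity)]
    nlinarith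
  have hV' : α⁻¹ * (|v| + α⁻¹ * O) < V :=
    lt_of_le_of_lt (by gcongr) hV
  have hO₀ : 0 ≤ O := (abs_nonneg _).trans (hdigit _ hx 0 0)
  have hOV' : α⁻¹ * (O + V) ≤ V := by
    refine le_trans (mul_le_mul_of_nonneg_left ?_ hq₀.le) hV.le
    linarith [mul_nonneg hq₀.le hO₀]
  have hdigit' := hdigit _ hx
  have hsum' := hsum _ hx
  exact ⟨round v, halfDigit y 0, halfDigit y 1,
    { exists_bound := ⟨O, fun k => ⟨hdigit' 0 k, hdigit' 1 k⟩⟩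
      centre_eq := hcentre
      right_le := h.eventually_abs_sideSum_truncate_le hc (hdigit' 0) (hdigit' 1) (hsum' 0)
        hcentre hV' hOV'
      left_le := h.eventually_abs_sideSum_truncate_le hc (hdigit' 1) (hdigit' 0) (hsum' 1)
        (by rw [add_comm (digitSum _ _), hcentre]) hV' hOV' }⟩

lemma exists_Icc_subset_specL_of_five_lt (h : IsQuadraticPisot α α' b c) (hc : c * c = 1)
    (hα : 5 < α) (hα' : 5 + 4 * α' ≤ α) : ∃ κ < 1 / 2, Set.Icc κ (1 / 2) ⊆ specL α := by
  have hα₀ : 0 < α := by linarith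
  have hdigit (x : ℝ) (hx : |x| ≤ 1 / 2) (σ k : ℕ) :
      |(halfDigit (roundDigit α x) σ k : ℝ)| ≤ (α + 3) / 4 :=
    (abs_halfDigit_le (abs_roundDigit_le hα₀.le hx k)).trans_eq (by ring)
  refine h.exists_Icc_subset_specL_of_halfDigit_le hc hdigit
    (fun x hx σ => abs_digitSum_truncate_le (by linarith) hx (hdigit x hx σ)
      fun k => abs_two_mul_halfDigit_sub_le) ?_
  have hq : α⁻¹ < 1 / 5 := by rw [inv_lt_comm₀ hα₀ (by norm_num)]; linarith
  have hq₀ : 0 < α⁻¹ := inv_pos.2 hα₀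
  have hmul : α * α⁻¹ = 1 := mul_inv_cancel₀ hα₀.ne'
  have hconj := h.mul_conj_eq_inv hc
  rcases mul_self_eq_one_iff.1 hc with rfl | rfl
  · rw [Int.cast_one, one_mul] at hconj
    rw [hconj] at hα' ⊢
    nlinarith
  · rw [Int.cast_neg, Int.cast_one, neg_one_mul, neg_eq_iff_eq_neg] at hconj
    rw [hconj]
    nlinarith

lemma exists_Icc_subset_specL_of_lt_five (h : IsQuadraticPisot α α' b c) (hc : c * c = 1)
    (hα : 4 < α) (hα_lt : α < 5) (hD : 4 ≤ α - α') :
    ∃ κ < 1 / 2, Set.Icc κ (1 / 2) ⊆ specL α := by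
  have hα₀ : 0 < α := by linarith
  have hq₀ : 0 < α⁻¹ := inv_pos.2 hα₀
  have hq : α⁻¹ < 1 / 4 := by rw [inv_lt_comm₀ hα₀ (by norm_num)]; linarith
  have hdigit (x : ℝ) (hx : |x| ≤ 1 / 2) (σ k : ℕ) :
      |(halfDigit (roundDigit α x) σ k : ℝ)| ≤ 1 :=
    abs_halfDigit_le_one (abs_roundDigit_le_two hα₀.le hα_lt hx k)
  have hgeom : 1 ≤ 1 / (1 - α⁻¹) := by rw [le_div_iff₀ (by linarith)]; linarith
  refine h.exists_Icc_subset_specL_of_halfDigit_le hc (O := 1 / (1 - α⁻¹))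
    (fun x hx σ k => (hdigit x hx σ k).trans hgeom) (fun x hx σ J k => ?_) ?_
  · have := abs_digitSum_le (abs_inv_lt_one h.one_lt)
      fun i => abs_truncate_le (hdigit x hx σ) J (k + i)
    rwa [abs_of_pos hq₀] at this
  · rw [mul_one_div, div_lt_iff₀ (by linarith)]
    nlinarith

end IsQuadraticPisot

/-! ### Bases less than four -/

/-- The digit sequence `y` with the additional first digit `a`. -/
def prepend (a : ℤ) (y : ℕ → ℤ) : ℕ → ℤ
  | 0 => a
  | k + 1 => y k

section Prepend

variable {q r s C : ℝ} {a : ℤ} {y : ℕ → ℤ}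

lemma abs_prepend_le (hy : ∀ k, |(y k : ℝ)| ≤ C) (ha : |(a : ℝ)| ≤ C) (k : ℕ) :
    |(prepend a y k : ℝ)| ≤ C := by
  cases k with
  | zero => exact ha
  | succ k => exact hy k

lemma digitSum_prepend (hq : |q| < 1) (hy : ∀ k, |(y k : ℝ)| ≤ C) :
    digitSum q (prepend a y) = a + q * digitSum q y :=
  digitSum_eq_add_mul hq
    (abs_prepend_le (fun k => (hy k).trans (le_max_right _ _)) (le_max_left |(a : ℝ)| C))

lemma truncate_prepend (J : ℕ) : truncate (J + 1) (prepend a y) = prepend a (truncate J y) := by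
  funext k
  cases k <;> simp [truncate, prepend]

lemma sideSum_prepend_zero (hq : |q| < 1) (hy : ∀ k, |(y k : ℝ)| ≤ C) :
    sideSum q r s (prepend a y) 0 = a + q * digitSum q y + r * s := by
  simp only [sideSum, zero_add, carry]
  rw [digitSum_prepend hq hy]

lemma carry_prepend_succ (k : ℕ) :
    carry r s (prepend a y) (k + 1) = carry r (a + r * s) y k := by
  induction k with
  | zero => rfl
  | succ k ih => rw [carry, ih, prepend, carry]

lemma sideSum_prepend_succ (k : ℕ) :
    sideSum q r s (prepend a y) (k + 1) = sideSum q r (a + r * s) y k := by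
  rw [sideSum, carry_prepend_succ, sideSum]
  simp only [Nat.add_right_comm k 1, prepend]

lemma abs_sideSum_prepend_prepend_le {p₀ p₁ : ℤ} {V B m : ℝ} (hq : |q| < 1)
    (hy : ∀ k, |(y k : ℝ)| ≤ m) (hV : |r| * (m + V) ≤ V)
    (h₀ : |p₀ + q * (p₁ + q * digitSum q y) + r * s| ≤ B)
    (h₁ : |p₁ + q * digitSum q y + r * (p₀ + r * s)| ≤ B)
    (h₂ : |r * (p₁ + r * (p₀ + r * s))| ≤ V)
    (hB : ∀ k, |digitSum q fun i => y (k + i)| ≤ B - V) (k : ℕ) :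
    |sideSum q r s (prepend p₀ (prepend p₁ y)) k| ≤ B := by
  match k with
  | 0 =>
    have hy' := abs_prepend_le (fun k => (hy k).trans (le_max_right _ _))
      (le_max_left |(p₁ : ℝ)| m)
    rwa [sideSum_prepend_zero hq hy', digitSum_prepend hq hy]
  | 1 => rwa [sideSum_prepend_succ, sideSum_prepend_zero hq hy]
  | k + 2 =>
    rw [sideSum_prepend_succ, sideSum_prepend_succ]
    exact (abs_sideSum_le hy hB h₂ hV k).trans_eq (sub_add_cancel B V)

end Prepend

/-- The digits of `y` are `-1`, `0` or `1`, and no three consecutive digits are all `1` or all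
`-1`. -/
structure HasSmallTriples (y : ℕ → ℤ) : Prop where
  abs_le_one : ∀ k, |(y k : ℝ)| ≤ 1
  abs_add_add_le_two : ∀ k, |(y k + y (k + 1) + y (k + 2) : ℝ)| ≤ 2

namespace HasSmallTriples

variable {y : ℕ → ℤ}

protected lemma truncate (hy : HasSmallTriples y) (J : ℕ) : HasSmallTriples (truncate J y) where
  abs_le_one := abs_truncate_le hy.abs_le_one J
  abs_add_add_le_two k := by
    by_cases hk : k + 2 < J
    · simpa only [truncate, if_pos hk, if_pos (show k + 1 < J by omega),
        if_pos (show k < J by omega)] using hy.abs_add_add_le_two k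
    · rw [show truncate J y (k + 2) = 0 from if_neg hk, Int.cast_zero, add_zero]
      linarith [abs_add_le (truncate J y k : ℝ) (truncate J y (k + 1)),
        abs_truncate_le hy.abs_le_one J k, abs_truncate_le hy.abs_le_one J (k + 1)]

protected lemma abs_digitSum_le {q : ℝ} (hq₀ : 0 ≤ q) (hq : q < 1) (hy : HasSmallTriples y)
    (k : ℕ) : |digitSum q fun i => y (k + i)| ≤ 1 / (1 - q) - q ^ 2 := by
  have hq' : |q| < 1 := by rwa [abs_of_nonneg hq₀]
  have hdigit (i : ℕ) := abs_le.1 (hy.abs_le_one i)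
  have htriple := abs_le.1 (hy.abs_add_add_le_two k)
  have htail := abs_digitSum_le hq' fun i => hy.abs_le_one (k + 3 + i)
  rw [abs_of_nonneg hq₀, abs_le] at htail
  have hgeom : 1 / (1 - q) = 1 + q + q ^ 2 + q ^ 3 * (1 / (1 - q)) := by
    field_simp [(sub_pos.2 hq).ne']
    ring
  have htail₁ := mul_le_mul_of_nonneg_left htail.1 (pow_nonneg hq₀ 3)
  have htail₂ := mul_le_mul_of_nonneg_left htail.2 (pow_nonneg hq₀ 3)
  have hsq : 0 ≤ 1 - q ^ 2 := by nlinarith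
  have hsq' : 0 ≤ q - q ^ 2 := by nlinarith
  rw [digitSum_shift hq' hy.abs_le_one, digitSum_shift hq' hy.abs_le_one,
    digitSum_shift hq' hy.abs_le_one, abs_le]
  constructor
  · nlinarith [mul_le_mul_of_nonneg_left (hdigit k).1 hsq,
      mul_le_mul_of_nonneg_left (hdigit (k + 1)).1 hsq',
      mul_le_mul_of_nonneg_left htriple.1 (sq_nonneg q)]
  · nlinarith [mul_le_mul_of_nonneg_left (hdigit k).2 hsq,
      mul_le_mul_of_nonneg_left (hdigit (k + 1)).2 hsq',
      mul_le_mul_of_nonneg_left htriple.2 (sq_nonneg q)]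

end HasSmallTriples

lemma hasSmallTriples_halfDigit {y : ℕ → ℤ} (hy : ∀ k, |y k| ≤ 2)
    (hpos : ∀ k, 2 ≤ y k → y (k + 1) ≤ 0) (hneg : ∀ k, y k ≤ -2 → 0 ≤ y (k + 1)) (σ : ℕ) :
    HasSmallTriples (halfDigit y σ) where
  abs_le_one k := abs_halfDigit_le_one (hy k)
  abs_add_add_le_two k := by
    -- A run `1, 1, 1` needs a digit `2` where halving rounds down, followed by a positive digit.
    have hint : |halfDigit y σ k + halfDigit y σ (k + 1) + halfDigit y σ (k + 2)| ≤ 2 := by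
      have h₀ := abs_le.1 (hy k)
      have h₁ := abs_le.1 (hy (k + 1))
      have h₂ := abs_le.1 (hy (k + 2))
      have hpos₀ := hpos k
      have hpos₁ : 2 ≤ y (k + 1) → y (k + 2) ≤ 0 := hpos (k + 1)
      have hneg₀ := hneg k
      have hneg₁ : y (k + 1) ≤ -2 → 0 ≤ y (k + 2) := hneg (k + 1)
      unfold halfDigit
      rw [abs_le]
      omega
    exact_mod_cast hint

section SmallBase

variable {α x : ℝ}

lemma roundDigit_succ_nonpos (hα : 0 < α) (hα_lt : α < 4) (hx : |x| ≤ 1 / 2) {k : ℕ}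
    (hk : 2 ≤ roundDigit α x k) : roundDigit α x (k + 1) ≤ 0 := by
  have hk' : (2 : ℝ) ≤ roundDigit α x k := by exact_mod_cast hk
  have hrem : roundRemainder α x (k + 1) ≤ 0 := by
    rw [roundRemainder_succ]
    linarith [(abs_le.1 (abs_mul_roundRemainder_le hα.le hx k)).2]
  rw [roundDigit, round_eq, ← Int.lt_add_one_iff, Int.floor_lt, zero_add, Int.cast_one]
  linarith [mul_nonpos_of_nonneg_of_nonpos hα.le hrem]

lemma roundDigit_succ_nonneg (hα : 0 < α) (hα_lt : α < 4) (hx : |x| ≤ 1 / 2) {k : ℕ}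
    (hk : roundDigit α x k ≤ -2) : 0 ≤ roundDigit α x (k + 1) := by
  have hk' : (roundDigit α x k : ℝ) ≤ -2 := by exact_mod_cast hk
  have hrem : 0 ≤ roundRemainder α x (k + 1) := by
    rw [roundRemainder_succ]
    linarith [(abs_le.1 (abs_mul_roundRemainder_le hα.le hx k)).1]
  rw [roundDigit, round_eq, Int.le_floor, Int.cast_zero]
  linarith [mul_nonneg hα.le hrem]

lemma hasSmallTriples_halfDigit_roundDigit (hα : 0 < α) (hα_lt : α < 4) (hx : |x| ≤ 1 / 2)
    (σ : ℕ) : HasSmallTriples (halfDigit (roundDigit α x) σ) :=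
  hasSmallTriples_halfDigit (abs_roundDigit_le_two hα.le (by linarith) hx)
    (fun _ => roundDigit_succ_nonpos hα hα_lt hx) (fun _ => roundDigit_succ_nonneg hα hα_lt hx) σ

end SmallBase

namespace HasSmallTriples

variable {q : ℝ} {y : ℕ → ℤ} {p₀ p₁ : ℤ}

lemma exists_abs_prepend_prepend_le (hy : HasSmallTriples y) (p₀ p₁ : ℤ) :
    ∃ C : ℝ, ∀ k, |(prepend p₀ (prepend p₁ y) k : ℝ)| ≤ C :=
  ⟨max |(p₀ : ℝ)| (max |(p₁ : ℝ)| 1), abs_prepend_le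
    (fun k => (abs_prepend_le (fun k => (hy.abs_le_one k).trans (le_max_right _ _))
      (le_max_left _ _) k).trans (le_max_right _ _)) (le_max_left _ _)⟩

lemma digitSum_prepend_prepend (hq : |q| < 1) (hy : HasSmallTriples y) :
    digitSum q (prepend p₀ (prepend p₁ y)) = p₀ + q * (p₁ + q * digitSum q y) := by
  rw [digitSum_prepend hq (abs_prepend_le (fun k => (hy.abs_le_one k).trans (le_max_right _ _))
    (le_max_left |(p₁ : ℝ)| 1)), digitSum_prepend hq hy.abs_le_one]

end HasSmallTriples

lemma eventually_truncate_prepend_prepend {p₀ p₁ r₀ r₁ : ℤ} {y z : ℕ → ℤ}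
    {P : (ℕ → ℤ) → (ℕ → ℤ) → Prop} (hy : HasSmallTriples y) (hz : HasSmallTriples z)
    (hP : ∀ y z, HasSmallTriples y → HasSmallTriples z →
      P (prepend p₀ (prepend p₁ y)) (prepend r₀ (prepend r₁ z))) :
    ∀ᶠ J in atTop, P (truncate J (prepend p₀ (prepend p₁ y)))
      (truncate J (prepend r₀ (prepend r₁ z))) := by
  filter_upwards [eventually_ge_atTop 2] with J hJ
  obtain ⟨J, rfl⟩ := Nat.exists_eq_add_of_le' hJ
  simp only [truncate_prepend]
  exact hP _ _ (hy.truncate J) (hz.truncate J)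

lemma exists_isPeakedPattern_prepend_prepend {α α' B v : ℝ} (hα : 1 < α) (hα_lt : α < 4)
    {a p₀ p₁ r₀ r₁ : ℤ} (hv : |α ^ 2 * (v - a) - α * (p₀ + r₀) - (p₁ + r₁)| ≤ 1 / 2)
    (hright : ∀ y z, HasSmallTriples y → HasSmallTriples z → ∀ k,
      |sideSum α⁻¹ α' (a + α⁻¹ * digitSum α⁻¹ (prepend r₀ (prepend r₁ z)))
        (prepend p₀ (prepend p₁ y)) k| ≤ B)
    (hleft : ∀ y z, HasSmallTriples y → HasSmallTriples z → ∀ k,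
      |sideSum α⁻¹ α' (a + α⁻¹ * digitSum α⁻¹ (prepend p₀ (prepend p₁ z)))
        (prepend r₀ (prepend r₁ y)) k| ≤ B) :
    ∃ f g, IsPeakedPattern α α' B v a f g := by
  set x := α ^ 2 * (v - a) - α * (p₀ + r₀) - (p₁ + r₁) with hx
  have hα₀ : 0 < α := zero_lt_one.trans hα
  have htriples := hasSmallTriples_halfDigit_roundDigit hα₀ hα_lt hv
  have hq := abs_inv_lt_one hα
  obtain ⟨C, hC⟩ := (htriples 0).exists_abs_prepend_prepend_le p₀ p₁
  obtain ⟨C', hC'⟩ := (htriples 1).exists_abs_prepend_prepend_le r₀ r₁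
  refine ⟨prepend p₀ (prepend p₁ (halfDigit (roundDigit α x) 0)),
    prepend r₀ (prepend r₁ (halfDigit (roundDigit α x) 1)),
    { exists_bound := ⟨max C C', fun k => ⟨(hC k).trans (le_max_left _ _),
        (hC' k).trans (le_max_right _ _)⟩⟩
      centre_eq := ?_
      right_le := eventually_truncate_prepend_prepend (P := fun f g => ∀ k,
        |sideSum α⁻¹ α' (a + α⁻¹ * digitSum α⁻¹ g) f k| ≤ B) (htriples 0) (htriples 1) hright
      left_le := eventually_truncate_prepend_prepend (P := fun f g => ∀ k,
        |sideSum α⁻¹ α' (a + α⁻¹ * digitSum α⁻¹ g) f k| ≤ B) (htriples 1) (htriples 0) hleft }⟩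
  have hexpansion : a + α⁻¹ * (p₀ + r₀ + α⁻¹ * (p₁ + r₁ + x)) = v := by
    rw [hx]
    field_simp
    ring
  rw [(htriples 0).digitSum_prepend_prepend hq, (htriples 1).digitSum_prepend_prepend hq]
  linear_combination hexpansion + α⁻¹ ^ 2 * inv_mul_digitSum_halfDigit_add hα hv

lemma abs_add_mul_le {u w q Q M N : ℝ} (hu : |u| ≤ M) (hq : |q| ≤ Q) (hw : |w| ≤ N) :
    |u + q * w| ≤ M + Q * N := by
  refine (abs_add_le _ _).trans (add_le_add hu ?_)
  rw [abs_mul]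
  exact mul_le_mul hq hw (abs_nonneg _) ((abs_nonneg _).trans hq)

/-- Here `Q` bounds the weights, `O` the outward sums over `y` and `z`, `S` the contribution of the
entries up to the centre, and `V` the carry past the two prepended digits. -/
protected lemma HasSmallTriples.abs_sideSum_prepend_prepend_le {q r Q m₀ m₁ O S V B : ℝ}
    {y z : ℕ → ℤ} {a p₀ p₁ r₀ r₁ : ℤ} (hq₀ : 0 ≤ q) (hq : q < 1) (hqQ : q ≤ Q) (hrQ : |r| ≤ Q)
    (hy : HasSmallTriples y) (hz : HasSmallTriples z) (hp₀ : |(p₀ : ℝ)| ≤ m₀)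
    (hp₁ : |(p₁ : ℝ)| ≤ m₁) (hr₀ : |(r₀ : ℝ)| ≤ m₀) (hr₁ : |(r₁ : ℝ)| ≤ m₁)
    (hO : 1 / (1 - q) - q ^ 2 ≤ O) (hS : |(a : ℝ)| + Q * (m₀ + Q * (m₁ + Q * O)) ≤ S)
    (h₀ : m₀ + Q * (m₁ + Q * O) + Q * S ≤ B) (h₁ : m₁ + Q * O + Q * (m₀ + Q * S) ≤ B)
    (h₂ : Q * (m₁ + Q * (m₀ + Q * S)) ≤ V) (hV : Q * (1 + V) ≤ V) (hOV : O + V ≤ B) (k : ℕ) :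
    |sideSum q r (a + q * digitSum q (prepend r₀ (prepend r₁ z)))
      (prepend p₀ (prepend p₁ y)) k| ≤ B := by
  have hq' : |q| < 1 := by rwa [abs_of_nonneg hq₀]
  have hqQ' : |q| ≤ Q := by rwa [abs_of_nonneg hq₀]
  have hy_sum : |digitSum q y| ≤ O := by simpa using (hy.abs_digitSum_le hq₀ hq 0).trans hO
  have hz_sum : |digitSum q z| ≤ O := by simpa using (hz.abs_digitSum_le hq₀ hq 0).trans hO
  rw [hz.digitSum_prepend_prepend hq']
  have hs : |a + q * (r₀ + q * (r₁ + q * digitSum q z))| ≤ S :=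
    (abs_add_mul_le le_rfl hqQ' (abs_add_mul_le hr₀ hqQ' (abs_add_mul_le hr₁ hqQ' hz_sum))).trans hS
  have hcarry : |r * (p₁ + r * (p₀ + r * (a + q * (r₀ + q * (r₁ + q * digitSum q z)))))| ≤ V := by
    rw [abs_mul]
    exact (mul_le_mul hrQ (abs_add_mul_le hp₁ hrQ (abs_add_mul_le hp₀ hrQ hs)) (abs_nonneg _)
      (hq₀.trans hqQ)).trans h₂
  refine abs_sideSum_prepend_prepend_le hq' hy.abs_le_one (V := V) ?_ ?_ ?_ hcarry
    (fun k => (hy.abs_digitSum_le hq₀ hq k).trans (by linarith)) k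
  · exact (mul_le_mul_of_nonneg_right hrQ (by linarith [(abs_nonneg _).trans hcarry])).trans hV
  · exact (abs_add_mul_le (abs_add_mul_le hp₀ hqQ' (abs_add_mul_le hp₁ hqQ' hy_sum)) hrQ
      hs).trans h₀
  · exact (abs_add_mul_le (abs_add_mul_le hp₁ hqQ' hy_sum) hrQ
      (abs_add_mul_le hp₀ hrQ hs)).trans h₁

namespace IsQuadraticPisot

variable {α α' : ℝ} {b c : ℤ}

lemma exists_Icc_subset_specL_of_lt_four (h : IsQuadraticPisot α α' b c) (hc : c * c = 1)
    (hα : α < 4) {Q m₀ m₁ O S V B : ℝ} {a p₀ p₁ r₀ r₁ : ℤ} (hQ : α⁻¹ ≤ Q)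
    (hp₀ : |(p₀ : ℝ)| ≤ m₀) (hp₁ : |(p₁ : ℝ)| ≤ m₁) (hr₀ : |(r₀ : ℝ)| ≤ m₀)
    (hr₁ : |(r₁ : ℝ)| ≤ m₁) (hO : 1 / (1 - α⁻¹) - α⁻¹ ^ 2 ≤ O)
    (hS : |(a : ℝ)| + Q * (m₀ + Q * (m₁ + Q * O)) ≤ S)
    (h₀ : m₀ + Q * (m₁ + Q * O) + Q * S ≤ B) (h₁ : m₁ + Q * O + Q * (m₀ + Q * S) ≤ B)
    (h₂ : Q * (m₁ + Q * (m₀ + Q * S)) ≤ V) (hV : Q * (1 + V) ≤ V) (hOV : O + V ≤ B)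
    (hB : 2 * B < α - α')
    (hcentre : |α ^ 2 * ((α - α') * (1 / 2) - a) - α * (p₀ + r₀) - (p₁ + r₁)| < 1 / 2) :
    ∃ κ < 1 / 2, Set.Icc κ (1 / 2) ⊆ specL α := by
  have hq₀ : 0 ≤ α⁻¹ := (inv_pos.2 (zero_lt_one.trans h.one_lt)).le
  have hq : α⁻¹ < 1 := inv_lt_one_of_one_lt₀ h.one_lt
  have hα' : |α'| ≤ Q := (h.abs_conj_eq_inv hc).trans_le hQ
  have hcont : Continuous fun t : ℝ =>
      |α ^ 2 * ((α - α') * t - a) - α * (p₀ + r₀) - (p₁ + r₁)| := by fun_prop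
  refine h.exists_Icc_subset_specL hc hB ?_
  filter_upwards [hcont.continuousWithinAt.eventually_lt_const hcentre] with t ht
  exact ⟨a, exists_isPeakedPattern_prepend_prepend h.one_lt hα ht.le
    (fun y z hy hz => hy.abs_sideSum_prepend_prepend_le hq₀ hq hQ hα' hz
      hp₀ hp₁ hr₀ hr₁ hO hS h₀ h₁ h₂ hV hOV)
    (fun y z hy hz => hy.abs_sideSum_prepend_prepend_le hq₀ hq hQ hα' hz
      hr₀ hr₁ hp₀ hp₁ hO hS h₀ h₁ h₂ hV hOV)⟩

/-- The digits come from the identity `(α - α') / 2 = 2 - α⁻¹`. -/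
lemma exists_Icc_subset_specL_of_trace_four_norm_one (h : IsQuadraticPisot α α' 4 1) :
    ∃ κ < 1 / 2, Set.Icc κ (1 / 2) ⊆ specL α := by
  have hconj : α' = α⁻¹ := by simpa using h.mul_conj_eq_inv (by norm_num)
  have hsum : α + α⁻¹ = 4 := by simpa [hconj] using h.add_conj
  have hmul : α * α⁻¹ = 1 := mul_inv_cancel₀ (zero_lt_one.trans h.one_lt).ne'
  have hq₀ : 0 < α⁻¹ := inv_pos.2 (zero_lt_one.trans h.one_lt)
  have hq_lt : α⁻¹ < 27 / 100 := by nlinarith [h.one_lt]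
  have hq_gt : 1 / 4 < α⁻¹ := by nlinarith
  refine h.exists_Icc_subset_specL_of_lt_four (by norm_num) (by linarith) (Q := 27 / 100)
    (m₀ := 1) (m₁ := 0) (O := 131 / 100) (S := 23 / 10) (V := 37 / 100) (B := 173 / 100)
    (a := 2) (p₀ := -1) (p₁ := 0) (r₀ := 0) (r₁ := 0) hq_lt.le (by simp) (by simp) (by simp)
    (by simp) ?_ (by norm_num) (by norm_num) (by norm_num) (by norm_num) (by norm_num)
    (by norm_num) (by linarith) ?_
  · rw [sub_le_iff_le_add, div_le_iff₀ (by linarith)]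
    nlinarith
  · have hcentre : α ^ 2 * ((α - α') * (1 / 2) - (2 : ℤ)) - α * ((-1 : ℤ) + (0 : ℤ)) -
        ((0 : ℤ) + (0 : ℤ)) = 0 := by
      push_cast
      rw [hconj]
      linear_combination α ^ 2 / 2 * hsum - α * hmul
    rw [hcentre, abs_zero]
    exact one_half_pos

/-- The digits come from `(α - α') / 2 = 2 + α⁻² (-2 + (3 - α) / 2)`, where the remainder
`(3 - α) / 2` is small. -/
lemma exists_Icc_subset_specL_of_trace_three_norm_neg_one (h : IsQuadraticPisot α α' 3 (-1)) :
    ∃ κ < 1 / 2, Set.Icc κ (1 / 2) ⊆ specL α := by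
  have hconj : α' = -α⁻¹ := by
    simpa [neg_eq_iff_eq_neg] using h.mul_conj_eq_inv (by norm_num)
  have hsum : α - α⁻¹ = 3 := by simpa [hconj, sub_eq_add_neg] using h.add_conj
  have hmul : α * α⁻¹ = 1 := mul_inv_cancel₀ (zero_lt_one.trans h.one_lt).ne'
  have hq₀ : 0 < α⁻¹ := inv_pos.2 (zero_lt_one.trans h.one_lt)
  have hq_lt : α⁻¹ < 303 / 1000 := by nlinarith
  have hq_gt : 3 / 10 < α⁻¹ := by nlinarith
  refine h.exists_Icc_subset_specL_of_lt_four (by norm_num) (by linarith) (Q := 303 / 1000)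
    (m₀ := 0) (m₁ := 1) (O := 1345 / 1000) (S := 22 / 10) (V := 435 / 1000) (B := 179 / 100)
    (a := 2) (p₀ := 0) (p₁ := -1) (r₀ := 0) (r₁ := -1) hq_lt.le (by simp) (by simp) (by simp)
    (by simp) ?_ (by norm_num) (by norm_num) (by norm_num) (by norm_num) (by norm_num)
    (by norm_num) (by linarith) ?_
  · rw [sub_le_iff_le_add, div_le_iff₀ (by linarith)]
    nlinarith
  · have hcentre : α ^ 2 * ((α - α') * (1 / 2) - (2 : ℤ)) - α * ((0 : ℤ) + (0 : ℤ)) -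
        ((-1 : ℤ) + (-1 : ℤ)) = (3 - α) / 2 := by
      push_cast
      rw [hconj]
      linear_combination (α ^ 2 - α) / 2 * hsum + (α - 1 / 2) * hmul
    rw [hcentre, abs_lt]
    constructor <;> linarith

end IsQuadraticPisot

/-! ### Quadratic units -/

lemma isQuadraticPisot_of_three_le {b : ℤ} (hb : 3 ≤ b) :
    IsQuadraticPisot ((b + √((b : ℝ) ^ 2 - 4)) / 2) ((b - √((b : ℝ) ^ 2 - 4)) / 2) b 1 := by
  have hb' : (3 : ℝ) ≤ b := by exact_mod_cast hb
  have hsq := Real.sq_sqrt (show 0 ≤ (b : ℝ) ^ 2 - 4 by nlinarith)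
  have hsqrt : 0 ≤ √((b : ℝ) ^ 2 - 4) := Real.sqrt_nonneg _
  refine ⟨by linarith, abs_lt.2 ⟨by nlinarith, by nlinarith⟩, by ring, ?_⟩
  push_cast
  linear_combination -hsq / 4

lemma isQuadraticPisot_of_one_le {b : ℤ} (hb : 1 ≤ b) :
    IsQuadraticPisot ((b + √((b : ℝ) ^ 2 + 4)) / 2) ((b - √((b : ℝ) ^ 2 + 4)) / 2) b (-1) := by
  have hb' : (1 : ℝ) ≤ b := by exact_mod_cast hb
  have hsq := Real.sq_sqrt (show 0 ≤ (b : ℝ) ^ 2 + 4 by positivity)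
  have hsqrt : 0 ≤ √((b : ℝ) ^ 2 + 4) := Real.sqrt_nonneg _
  refine ⟨by nlinarith, abs_lt.2 ⟨by nlinarith, by nlinarith⟩, by ring, ?_⟩
  push_cast
  linear_combination -hsq / 4

namespace IsQuadraticPisot

variable {α α' : ℝ} {b : ℤ}

lemma exists_Icc_subset_specL_of_norm_one (h : IsQuadraticPisot α α' b 1) (hb : 4 ≤ b) :
    ∃ κ < 1 / 2, Set.Icc κ (1 / 2) ⊆ specL α := by
  have hsum := h.add_conj
  have hmul : α * α' = 1 := by simpa using h.mul_conj
  have hα'_lt := (abs_lt.1 h.abs_conj_lt_one).2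
  have hα' : 0 < α' := pos_of_mul_pos_right (hmul ▸ one_pos) (zero_lt_one.trans h.one_lt).le
  rcases hb.eq_or_lt with rfl | hb
  · exact h.exists_Icc_subset_specL_of_trace_four_norm_one
  rcases (Int.add_one_le_of_lt hb).eq_or_lt with rfl | hb
  · push_cast at hsum
    exact h.exists_Icc_subset_specL_of_lt_five rfl (by linarith) (by linarith) (by nlinarith)
  · have hb' : (6 : ℝ) ≤ b := by exact_mod_cast hb
    exact h.exists_Icc_subset_specL_of_five_lt rfl (by linarith) (by nlinarith)

lemma exists_Icc_subset_specL_of_norm_neg_one (h : IsQuadraticPisot α α' b (-1)) (hb : 3 ≤ b) :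
    ∃ κ < 1 / 2, Set.Icc κ (1 / 2) ⊆ specL α := by
  have hsum := h.add_conj
  have hmul : α * α' = -1 := by simpa using h.mul_conj
  have hα'_gt := (abs_lt.1 h.abs_conj_lt_one).1
  have hα' : α' < 0 := by nlinarith [h.one_lt]
  rcases hb.eq_or_lt with rfl | hb
  · exact h.exists_Icc_subset_specL_of_trace_three_norm_neg_one
  rcases (Int.add_one_le_of_lt hb).eq_or_lt with rfl | hb
  · push_cast at hsum
    exact h.exists_Icc_subset_specL_of_lt_five rfl (by linarith) (by linarith) (by linarith)
  · have hb' : (5 : ℝ) ≤ b := by exact_mod_cast hb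
    exact h.exists_Icc_subset_specL_of_five_lt rfl (by linarith) (by linarith)

end IsQuadraticPisot

theorem stmt19 (b : ℤ) (α : ℝ)
    (h : (4 ≤ b ∧ α = ((b : ℝ) + Real.sqrt ((b : ℝ) ^ 2 - 4)) / 2) ∨
         (3 ≤ b ∧ α = ((b : ℝ) + Real.sqrt ((b : ℝ) ^ 2 + 4)) / 2)) :
    (∃ κ : ℝ, κ < 1 / 2 ∧ Set.Icc κ (1 / 2) ⊆ specL α) ∧
    0 < MeasureTheory.volume (specL α) := by
  obtain ⟨κ, hκ, hsubset⟩ : ∃ κ < 1 / 2, Set.Icc κ (1 / 2) ⊆ specL α := by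
    rcases h with ⟨hb, rfl⟩ | ⟨hb, rfl⟩
    · exact (isQuadraticPisot_of_three_le (by omega)).exists_Icc_subset_specL_of_norm_one hb
    · exact (isQuadraticPisot_of_one_le (by omega)).exists_Icc_subset_specL_of_norm_neg_one hb
  exact ⟨⟨κ, hκ, hsubset⟩, (MeasureTheory.Measure.measure_Ioo_pos _).2 hκ |>.trans_le
    (MeasureTheory.measure_mono (Set.Ioo_subset_Icc_self.trans hsubset))⟩
end
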